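/- arXiv:2604.13212 — 7 statements merged into one kernel-verified Lean document; each statement's English description precedes it below -/
import Mathlib

section
/- Let G be a (possibly empty) graph. Suppose S and S' are shields of G satisfying S(v) ≤ S'(v) for each v ∈ V(G), and suppose T and T' are targets of G satisfying T(v) ≥ T'(v) for each v ∈ V(G). Then, for each j ∈ {3,4}, if G is ST^(j)-(S,T)-degenerate, then G is ST^(j)-(S',T')-degenerate. -/
/-!
Monotonicity is proved by simulation. Let a legal sequence run on a state `st`, and let `st'` be a
state dominating it: fewer active vertices and, on those, a larger shield and a smaller target.
An operation `(u, W)` on `st` is answered as follows.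

* If `u` is no longer active in `st'`, or its target there is strictly smaller, nothing is done:
  the slack in the target pays for the operation.
* Otherwise the targets of `u` agree, and `(u, W')` is performed, where `W'` consists of those
  `w ∈ W` active in `st'` at which the two shields agree. On `W'` the sum `S + T` has not grown,
  and at `u` it has not shrunk, so the operation is legal; on `W \ W'` the larger shield is
  strictly larger and can afford to lose `1`.

Domination is preserved, and `W' ⊆ W`, so restrictedness is preserved too. When `st` has no
active vertex left, neither has `st'`.
-/

open scoped Classical

noncomputable section

namespace StrictDeg

/-- The state of the `ShadeSave` process: the active vertex set (the vertex set of the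
current induced subgraph), the current shield, and the current target. -/
structure State (V : Type) where
  A : Finset V
  S : V → ℕ
  T : V → ℕ

variable {V : Type}

/-- The output of the operation `ShadeSave(G[A], S, T, u, W)`. -/
def applyStep (G : SimpleGraph V) (st : State V) (u : V) (W : Finset V) : State V where
  A := if st.T u = 1 then st.A.erase u else st.A
  S := fun v => if G.Adj u v ∧ v ∈ st.A ∧ v ∉ W then st.S v - 1 else st.S v
  T := fun v => if v = u ∧ 1 < st.T u then st.T u - 1 else st.T v

/-- Legality of the operation `ShadeSave(G[A], S, T, u, W)`:  `u` is a vertex of the current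
graph, `W` is a set of neighbors of `u` in the current graph,
`S u + T u > ∑_{w ∈ W} (S w + T w)`, and the output shield is nonnegative (in `ℕ` terms:
every neighbor of `u` in the current graph that is not saved has shield value at least 1). -/
def LegalStep (G : SimpleGraph V) (st : State V) (u : V) (W : Finset V) : Prop :=
  u ∈ st.A ∧
  (∀ w ∈ W, w ∈ st.A ∧ G.Adj u w) ∧
  (∑ w ∈ W, (st.S w + st.T w)) < st.S u + st.T u ∧
  (∀ v ∈ st.A, G.Adj u v → v ∉ W → 1 ≤ st.S v)

/-- `LegalSeq G st l` means `l` is a legal sequence of `ShadeSave` operations starting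
from the state `st`. -/
def LegalSeq (G : SimpleGraph V) : State V → List (V × Finset V) → Prop
  | _, [] => True
  | st, op :: rest => LegalStep G st op.1 op.2 ∧ LegalSeq G (applyStep G st op.1 op.2) rest

/-- The final state after applying the operations in `l` in order. -/
def finalState (G : SimpleGraph V) (st : State V) (l : List (V × Finset V)) : State V :=
  l.foldl (fun s op => applyStep G s op.1 op.2) st

/-- The induced subgraph of `G` on `A`, with shield `S` and target `T`, admits a complete
legal sequence, i.e. it is `ST⁽³⁾`-`(S,T)`-degenerate. -/
def ST3DegOn (G : SimpleGraph V) (A : Finset V) (S T : V → ℕ) : Prop :=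
  ∃ l : List (V × Finset V),
    LegalSeq G ⟨A, S, T⟩ l ∧ (finalState G ⟨A, S, T⟩ l).A = ∅

/-- The induced subgraph of `G` on `A`, with shield `S` and target `T`, admits a complete
restricted (every operation saves on at most one vertex) legal sequence, i.e. it is
`ST⁽⁴⁾`-`(S,T)`-degenerate. -/
def ST4DegOn (G : SimpleGraph V) (A : Finset V) (S T : V → ℕ) : Prop :=
  ∃ l : List (V × Finset V),
    LegalSeq G ⟨A, S, T⟩ l ∧ (∀ op ∈ l, op.2.card ≤ 1) ∧
      (finalState G ⟨A, S, T⟩ l).A = ∅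

/-- `G` is `ST⁽³⁾`-`(S,T)`-degenerate. -/
def ST3Deg [Fintype V] (G : SimpleGraph V) (S T : V → ℕ) : Prop :=
  ST3DegOn G Finset.univ S T

/-- `G` is `ST⁽⁴⁾`-`(S,T)`-degenerate. -/
def ST4Deg [Fintype V] (G : SimpleGraph V) (S T : V → ℕ) : Prop :=
  ST4DegOn G Finset.univ S T

/-- The fractional strict type-3 degeneracy
`ST⁽³⁾*(G) = inf {(s+t)/t : G is ST⁽³⁾-(s,t)-degenerate}`. -/
def ST3Star [Fintype V] (G : SimpleGraph V) : ℝ :=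
  sInf { x : ℝ | ∃ s t : ℕ, 1 ≤ t ∧ ST3Deg G (fun _ => s) (fun _ => t) ∧
    x = ((s : ℝ) + t) / t }

/-- The fractional strict type-4 degeneracy
`ST⁽⁴⁾*(G) = inf {(s+t)/t : G is ST⁽⁴⁾-(s,t)-degenerate}`. -/
def ST4Star [Fintype V] (G : SimpleGraph V) : ℝ :=
  sInf { x : ℝ | ∃ s t : ℕ, 1 ≤ t ∧ ST4Deg G (fun _ => s) (fun _ => t) ∧
    x = ((s : ℝ) + t) / t }

/-- A cover `𝓗 = (L, H)` of the graph `G`. -/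
structure Cover (G : SimpleGraph V) where
  /-- The vertex type of the cover graph `H`. -/
  U : Type
  fin : Fintype U
  /-- The cover graph. -/
  H : SimpleGraph U
  /-- The lists: `L v` is the part of the partition of `V(H)` corresponding to `v`. -/
  L : V → Finset U
  part : ∀ x : U, ∃! v : V, x ∈ L v
  indep : ∀ v : V, ∀ x ∈ L v, ∀ y ∈ L v, ¬ H.Adj x y
  cross : ∀ u v : V, ∀ x ∈ L u, ∀ y ∈ L v, H.Adj x y → G.Adj u v
  matching : ∀ u v : V, G.Adj u v → ∀ x ∈ L u, ∀ y ∈ L v, ∀ y' ∈ L v,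
      H.Adj x y → H.Adj x y' → y = y'

/-- `G` is `(𝓗, b)`-colorable: there is an independent set of the cover graph meeting
every list in at least `b` vertices. -/
def Cover.Colorable {G : SimpleGraph V} (C : Cover G) (b : ℕ) : Prop :=
  ∃ I : Finset C.U, (∀ x ∈ I, ∀ y ∈ I, ¬ C.H.Adj x y) ∧ ∀ v : V, b ≤ (I ∩ C.L v).card

/-- `G` is `(a,b)`-DP-colorable. -/
def DPColorable (G : SimpleGraph V) (a b : ℕ) : Prop :=
  ∀ C : Cover G, (∀ v : V, (C.L v).card = a) → C.Colorable b

/-- The fractional DP-chromatic number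
`χ*_DP(G) = inf {a/b : G is (a,b)-DP-colorable}`. -/
def DPStar (G : SimpleGraph V) : ℝ :=
  sInf { x : ℝ | ∃ a b : ℕ, 1 ≤ b ∧ b ≤ a ∧ DPColorable G a b ∧ x = (a : ℝ) / b }

/-- `G` is `(F₁, F₂)`-DP-colorable. -/
def DPColorableFn (G : SimpleGraph V) (F₁ F₂ : V → ℕ) : Prop :=
  ∀ C : Cover G, (∀ v : V, (C.L v).card = F₁ v) →
    ∃ I : Finset C.U, (∀ x ∈ I, ∀ y ∈ I, ¬ C.H.Adj x y) ∧
      ∀ v : V, (I ∩ C.L v).card = F₂ v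


/-- `Dominates st' st`: the active vertices of `st'` are active in `st`, and at each of them `st'`
has at least the shield and at most the target of `st`, the latter being positive. -/
def Dominates (st' st : State V) : Prop :=
  st'.A ⊆ st.A ∧ ∀ v ∈ st'.A, st.S v ≤ st'.S v ∧ st'.T v ≤ st.T v ∧ 1 ≤ st'.T v

/-- An operation at a vertex that is inactive in `st'`, or has strictly smaller target there,
needs no answer. -/
lemma Dominates.skip (G : SimpleGraph V) {st' st : State V} (h : Dominates st' st) (u : V)
    (W : Finset V) (hu : u ∈ st'.A → st'.T u < st.T u) :
    Dominates st' (applyStep G st u W) := by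
  obtain ⟨hA, hd⟩ := h
  refine ⟨fun v hv => ?_, fun v hv => ?_⟩
  · have h1 := hd v hv
    have h2 := hA hv
    simp only [applyStep]
    split_ifs with ht
    · refine Finset.mem_erase.2 ⟨?_, h2⟩
      rintro rfl
      have := hu hv
      omega
    · exact h2
  · obtain ⟨h1, h2, h3⟩ := hd v hv
    simp only [applyStep]
    refine ⟨?_, ?_, h3⟩
    · split_ifs <;> omega
    · split_ifs with ht
      · obtain ⟨rfl, ht⟩ := ht
        have := hu hv
        omega
      · exact h2

/-- The vertices of `W` that the answering operation still saves. -/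
def tightPart (st' st : State V) (W : Finset V) : Finset V :=
  W.filter fun w => w ∈ st'.A ∧ st'.S w = st.S w

lemma mem_tightPart {st' st : State V} {W : Finset V} {w : V} :
    w ∈ tightPart st' st W ↔ w ∈ W ∧ w ∈ st'.A ∧ st'.S w = st.S w := by
  simp [tightPart]

lemma Dominates.legal (G : SimpleGraph V) {st' st : State V} (h : Dominates st' st) (u : V)
    (W : Finset V) (hl : LegalStep G st u W) (hu : u ∈ st'.A) (hT : st'.T u = st.T u) :
    LegalStep G st' u (tightPart st' st W) := by
  obtain ⟨hA, hd⟩ := h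
  obtain ⟨-, hW, hsum, hS⟩ := hl
  refine ⟨hu, fun w hw => ?_, ?_, fun v hv hadj hvW => ?_⟩
  · rw [mem_tightPart] at hw
    exact ⟨hw.2.1, (hW w hw.1).2⟩
  · calc ∑ w ∈ tightPart st' st W, (st'.S w + st'.T w)
        ≤ ∑ w ∈ tightPart st' st W, (st.S w + st.T w) := by
          refine Finset.sum_le_sum fun w hw => ?_
          rw [mem_tightPart] at hw
          have := hd w hw.2.1
          omega
      _ ≤ ∑ w ∈ W, (st.S w + st.T w) := Finset.sum_le_sum_of_subset (Finset.filter_subset _ _)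
      _ < st.S u + st.T u := hsum
      _ ≤ st'.S u + st'.T u := by
          have := hd u hu
          omega
  · have h1 := (hd v hv).1
    by_cases hvW0 : v ∈ W
    · have : st'.S v ≠ st.S v := fun he => hvW (mem_tightPart.2 ⟨hvW0, hv, he⟩)
      omega
    · exact (hS v (hA hv) hadj hvW0).trans h1

lemma Dominates.step (G : SimpleGraph V) {st' st : State V} (h : Dominates st' st) (u : V)
    (W : Finset V) (hT : st'.T u = st.T u) :
    Dominates (applyStep G st' u (tightPart st' st W)) (applyStep G st u W) := by
  obtain ⟨hA, hd⟩ := h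
  have hsub : (applyStep G st' u (tightPart st' st W)).A ⊆ st'.A := by
    simp only [applyStep]
    split_ifs
    · exact Finset.erase_subset _ _
    · exact subset_rfl
  refine ⟨?_, fun v hv' => ?_⟩
  · simp only [applyStep, hT]
    split_ifs
    · exact Finset.erase_subset_erase _ hA
    · exact hA
  · have hv := hsub hv'
    obtain ⟨h1, h2, h3⟩ := hd v hv
    refine ⟨?_, ?_, ?_⟩
    · have hvA := hA hv
      have := mem_tightPart (st' := st') (st := st) (W := W) (w := v)
      simp only [applyStep]
      by_cases hadj : G.Adj u v <;> by_cases hvW : v ∈ W <;> by_cases he : st'.S v = st.S v <;>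
        simp [hadj, hvW, hv, hvA, he, this] <;> omega
    · simp only [applyStep, hT]
      split_ifs
      · exact le_rfl
      · exact h2
    · simp only [applyStep]
      split_ifs
      · omega
      · exact h3

/-- The simulation: a legal sequence on `st` is answered by one on a dominating `st'` that leaves
no further vertices active and never saves more vertices at once. -/
lemma Dominates.simulate (G : SimpleGraph V) (l : List (V × Finset V)) :
    ∀ {st' st : State V}, Dominates st' st → LegalSeq G st l →
      ∃ l' : List (V × Finset V), LegalSeq G st' l' ∧
        (∀ op' ∈ l', ∃ op ∈ l, op'.2.card ≤ op.2.card) ∧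
        (finalState G st' l').A ⊆ (finalState G st l).A := by
  induction l with
  | nil =>
    intro st' st h _
    exact ⟨[], trivial, by simp, h.1⟩
  | cons op l ih =>
    intro st' st h hl
    obtain ⟨u, W⟩ := op
    obtain ⟨hstep, hrest⟩ := hl
    by_cases hu : u ∈ st'.A ∧ st'.T u = st.T u
    · obtain ⟨l', h1, h2, h3⟩ := ih (h.step G u W hu.2) hrest
      refine ⟨(u, tightPart st' st W) :: l', ⟨h.legal G u W hstep hu.1 hu.2, h1⟩, ?_, h3⟩
      intro op' hop'
      rcases List.mem_cons.1 hop' with rfl | hop'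
      · exact ⟨(u, W), List.mem_cons_self, Finset.card_filter_le _ _⟩
      · obtain ⟨op, hop, hc⟩ := h2 op' hop'
        exact ⟨op, List.mem_cons_of_mem _ hop, hc⟩
    · have hlt : u ∈ st'.A → st'.T u < st.T u := fun hm =>
        lt_of_le_of_ne (h.2 u hm).2.1 fun he => hu ⟨hm, he⟩
      obtain ⟨l', h1, h2, h3⟩ := ih (h.skip G u W hlt) hrest
      refine ⟨l', h1, fun op' hop' => ?_, h3⟩
      obtain ⟨op, hop, hc⟩ := h2 op' hop'
      exact ⟨op, List.mem_cons_of_mem _ hop, hc⟩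

/-- Let `G` be a (possibly empty) graph.  Suppose `S` and `S'` are shields of
`G` satisfying `S(v) ≤ S'(v)` for each vertex `v`, and suppose `T` and `T'` are targets of `G`
satisfying `T(v) ≥ T'(v)` for each vertex `v`.  Then, for each `j ∈ {3,4}`, if `G` is
`ST⁽ʲ⁾`-`(S,T)`-degenerate, then `G` is `ST⁽ʲ⁾`-`(S',T')`-degenerate. -/
theorem stDeg_mono {V : Type} [Fintype V] (G : SimpleGraph V)
    (S S' T T' : V → ℕ) (hT : ∀ v, 1 ≤ T v) (hT' : ∀ v, 1 ≤ T' v)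
    (hS : ∀ v, S v ≤ S' v) (hTT' : ∀ v, T' v ≤ T v) :
    (ST3Deg G S T → ST3Deg G S' T') ∧ (ST4Deg G S T → ST4Deg G S' T') := by
  have h : Dominates ⟨Finset.univ, S', T'⟩ ⟨Finset.univ, S, T⟩ :=
    ⟨subset_rfl, fun v _ => ⟨hS v, hTT' v, hT' v⟩⟩
  constructor
  · rintro ⟨l, hl, hA⟩
    obtain ⟨l', h1, -, h3⟩ := h.simulate G l hl
    exact ⟨l', h1, Finset.subset_empty.1 (hA ▸ h3)⟩
  · rintro ⟨l, hl, hc, hA⟩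
    obtain ⟨l', h1, h2, h3⟩ := h.simulate G l hl
    refine ⟨l', h1, fun op' hop' => ?_, Finset.subset_empty.1 (hA ▸ h3)⟩
    obtain ⟨op, hop, hle⟩ := h2 op' hop'
    exact hle.trans (hc op hop)

end StrictDeg
end
end

section
/- For each j ∈ {3,4}: if a nonempty graph G is ST^(j)-(S,T)-degenerate for some shield S and target T of G, and s = max_{v ∈ V(G)} S(v) and t = min_{v ∈ V(G)} T(v), then G is ST^(j)-(s,t)-degenerate, and consequently ST^(j)*(G) ≤ (s+t)/t. -/
/-!
Both claims follow from one monotonicity principle: a legal sequence for `(S, T)` can be turned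
into a legal sequence for `(S', T')` with the same final vertex set whenever `S ≤ S'` and
`1 ≤ T' ≤ T` pointwise.

Run the two processes side by side, keeping the vertex sets equal and the inequalities
`S ≤ S'`, `T' ≤ T`. When the original process applies an operation at `u` with saved set `W`:

* if `T' u < T u`, the new process does nothing; this only lowers `S` and `T u`, and `u` is not
  deleted because `T u > T' u ≥ 1`;
* if `T' u = T u`, the new process operates at `u` and saves only those `w ∈ W` with
  `S' w = S w`. The other vertices of `W` have a surplus of shield and can afford to lose one. On
  the vertices still saved `S' + T' ≤ S + T`, while `S' u + T' u ≥ S u + T u`, so the operation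
  is legal.

The saved sets only shrink, so restricted sequences stay restricted. This is
`LegalSeq.exists_of_le`. Applying it to the constant functions `s` and `t` gives the degeneracy
claims, and then `(s + t) / t` belongs to the set whose infimum defines the fractional parameter.
-/

open scoped Classical

noncomputable section

namespace StrictDeg

variable {V : Type}

/-- Simulation of a legal sequence after raising the shield and lowering the target: the new
sequence ends with the same vertex set, and each of its saved sets is contained in a saved set of
the original sequence. -/
theorem LegalSeq.exists_of_le (G : SimpleGraph V) (l : List (V × Finset V)) :
    ∀ (A : Finset V) (S T S' T' : V → ℕ), (∀ v, S v ≤ S' v) → (∀ v, T' v ≤ T v) →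
      (∀ v, 1 ≤ T' v) → LegalSeq G ⟨A, S, T⟩ l →
      ∃ l' : List (V × Finset V), LegalSeq G ⟨A, S', T'⟩ l' ∧
        (∀ op' ∈ l', ∃ op ∈ l, op'.2 ⊆ op.2) ∧
        (finalState G ⟨A, S', T'⟩ l').A = (finalState G ⟨A, S, T⟩ l).A := by
  induction l with
  | nil =>
    intro A S T S' T' _ _ _ _
    exact ⟨[], trivial, by simp, rfl⟩
  | cons op l ih =>
    obtain ⟨u, W⟩ := op
    rintro A S T S' T' hS hT hT1 ⟨⟨huA, hWA, hsum, hshield⟩, hl⟩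
    dsimp only at huA hWA hsum hshield
    rcases (hT u).lt_or_eq with hlt | heq
    · -- The operation at `u` is skipped.
      have hTu : T u ≠ 1 := by have := hT1 u; omega
      obtain ⟨l', hl', hsub, hfin⟩ := ih
        (if T u = 1 then A.erase u else A)
        (fun v => if G.Adj u v ∧ v ∈ A ∧ v ∉ W then S v - 1 else S v)
        (fun v => if v = u ∧ 1 < T u then T u - 1 else T v) S' T'
        (fun v => by
          have := hS v
          split_ifs <;> omega)
        (fun v => by
          have := hT v
          split_ifs with h
          · rw [h.1]; omega
          · exact this)
        hT1 hl
      rw [if_neg hTu] at hl' hfin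
      refine ⟨l', hl', fun o ho => ?_, hfin.trans ?_⟩
      · obtain ⟨o₀, h₀, h⟩ := hsub o ho
        exact ⟨o₀, List.mem_cons_of_mem _ h₀, h⟩
      · simp [finalState, applyStep, hTu]
    · -- The operation at `u` is kept, saving only the vertices of `W` without surplus shield.
      set W' : Finset V := W.filter (fun w => S' w = S w) with hW'
      have hmem : ∀ w, w ∈ W' ↔ w ∈ W ∧ S' w = S w := fun w => by simp [hW']
      have hstep : LegalStep G ⟨A, S', T'⟩ u W' := by
        refine ⟨huA, fun w hw => hWA w ((hmem w).1 hw).1, ?_, fun v hv hadj hvW => ?_⟩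
        · calc ∑ w ∈ W', (S' w + T' w) ≤ ∑ w ∈ W', (S w + T w) :=
                Finset.sum_le_sum fun w hw => by
                  have := hT w
                  rw [((hmem w).1 hw).2]; omega
            _ ≤ ∑ w ∈ W, (S w + T w) :=
                Finset.sum_le_sum_of_subset (Finset.filter_subset _ _)
            _ < S u + T u := hsum
            _ ≤ S' u + T' u := by have := hS u; omega
        · have h1 := hS v
          by_cases hvW₀ : v ∈ W
          · have : S' v ≠ S v := fun h => hvW ((hmem v).2 ⟨hvW₀, h⟩)
            change 1 ≤ S' v
            omega
          · exact (hshield v hv hadj hvW₀).trans h1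
      obtain ⟨l', hl', hsub, hfin⟩ := ih
        (if T u = 1 then A.erase u else A)
        (fun v => if G.Adj u v ∧ v ∈ A ∧ v ∉ W then S v - 1 else S v)
        (fun v => if v = u ∧ 1 < T u then T u - 1 else T v)
        (fun v => if G.Adj u v ∧ v ∈ A ∧ v ∉ W' then S' v - 1 else S' v)
        (fun v => if v = u ∧ 1 < T' u then T' u - 1 else T' v)
        (fun v => by
          have h1 := hS v
          have h2 := hmem v
          by_cases ha : v ∈ W <;> by_cases hb : S' v = S v <;> split_ifs <;>
            first | omega | (exfalso; tauto))
        (fun v => by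
          have := hT v
          rw [heq]
          split_ifs <;> omega)
        (fun v => by
          have := hT1 v
          split_ifs <;> omega)
        hl
      refine ⟨(u, W') :: l', ⟨hstep, ?_⟩, fun o ho => ?_, ?_⟩
      · simpa only [applyStep, heq] using hl'
      · rcases List.mem_cons.1 ho with rfl | ho
        · exact ⟨(u, W), List.mem_cons_self, Finset.filter_subset _ _⟩
        · obtain ⟨o₀, h₀, h⟩ := hsub o ho
          exact ⟨o₀, List.mem_cons_of_mem _ h₀, h⟩
      · simpa only [finalState, List.foldl_cons, applyStep, heq] using hfin

/-- For each `j ∈ {3,4}`: if a nonempty graph `G` is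
`ST⁽ʲ⁾`-`(S,T)`-degenerate for some shield `S` and target `T` of `G`, and
`s = max_{v} S(v)` and `t = min_{v} T(v)`, then `G` is `ST⁽ʲ⁾`-`(s,t)`-degenerate, and
consequently `ST⁽ʲ⁾*(G) ≤ (s+t)/t`. -/
theorem stDeg_const_of_deg {V : Type} [Fintype V] [Nonempty V] (G : SimpleGraph V)
    (S T : V → ℕ) (hT : ∀ v, 1 ≤ T v) (s t : ℕ)
    (hs : IsGreatest (Set.range S) s) (ht : IsLeast (Set.range T) t) :
    (ST3Deg G S T →
      ST3Deg G (fun _ => s) (fun _ => t) ∧ ST3Star G ≤ ((s : ℝ) + t) / t) ∧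
    (ST4Deg G S T →
      ST4Deg G (fun _ => s) (fun _ => t) ∧ ST4Star G ≤ ((s : ℝ) + t) / t) := by
  have hSs : ∀ v, S v ≤ s := fun v => hs.2 ⟨v, rfl⟩
  have htT : ∀ v, t ≤ T v := fun v => ht.2 ⟨v, rfl⟩
  have ht1 : 1 ≤ t := by
    obtain ⟨v, hv⟩ := ht.1
    exact hv ▸ hT v
  constructor
  · rintro ⟨l, hl, hfin⟩
    obtain ⟨l', hl', -, hfin'⟩ := LegalSeq.exists_of_le G l Finset.univ S T
      (fun _ => s) (fun _ => t) hSs htT (fun _ => ht1) hl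
    have hdeg : ST3Deg G (fun _ => s) (fun _ => t) := ⟨l', hl', hfin'.trans hfin⟩
    refine ⟨hdeg, csInf_le ⟨0, ?_⟩ ⟨s, t, ht1, hdeg, rfl⟩⟩
    rintro x ⟨a, b, -, -, rfl⟩
    positivity
  · rintro ⟨l, hl, hcard, hfin⟩
    obtain ⟨l', hl', hsub, hfin'⟩ := LegalSeq.exists_of_le G l Finset.univ S T
      (fun _ => s) (fun _ => t) hSs htT (fun _ => ht1) hl
    have hdeg : ST4Deg G (fun _ => s) (fun _ => t) := by
      refine ⟨l', hl', fun o ho => ?_, hfin'.trans hfin⟩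
      obtain ⟨o₀, h₀, h⟩ := hsub o ho
      exact (Finset.card_le_card h).trans (hcard o₀ h₀)
    refine ⟨hdeg, csInf_le ⟨0, ?_⟩ ⟨s, t, ht1, hdeg, rfl⟩⟩
    rintro x ⟨a, b, -, -, rfl⟩
    positivity

end StrictDeg
end
end

section
/- Suppose S and T are a shield and a target of a graph G. If G is ST^(3)-(S,T)-degenerate, then G is (S+T, T)-DP-colorable. Consequently, if G is ST^(3)-(s,t)-degenerate for integers s ≥ 0 and t ≥ 1, then χ*_DP(G) ≤ (s+t)/t. -/
/-!
The colouring is built greedily along the legal sequence. The invariant is that every active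
vertex `v` still has a list `M v ⊆ L v` of exactly `S v + T v` admissible colours, of which `T v`
are still to be chosen. For an operation at `u` saving on `W`, the matching condition lets each
colour in `M w`, `w ∈ W`, forbid at most one colour of `M u`; since
`∑_{w ∈ W} |M w| < |M u|`, some `x ∈ M u` has no neighbour in the lists of `W`
(`exists_free_color`). Choosing `x` consumes one colour and one unit of the target at `u`, costs
nothing on `W`, and costs at most one colour, paid for by the shield, at every other active
neighbour of `u`. `exists_coloring` runs the induction; the bound on the fractional
DP-chromatic number is the case of constant `S` and `T`.
-/

open scoped Classical

noncomputable section

namespace StrictDeg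

variable {V : Type}

/-- The colour choice of a single operation: the matching between `L w` and `L u` makes each
colour of `M w` forbid at most one colour of `M u`, so a strict inequality of list sizes leaves a
colour free. -/
lemma exists_free_color {G : SimpleGraph V} (C : Cover G) (M : V → Finset C.U)
    (hM : ∀ v, M v ⊆ C.L v) (u : V) (W : Finset V) (hW : ∀ w ∈ W, G.Adj u w)
    (hlt : ∑ w ∈ W, (M w).card < (M u).card) :
    ∃ x ∈ M u, ∀ w ∈ W, ∀ y ∈ M w, ¬ C.H.Adj x y := by
  by_contra! hcon
  have hsub : M u ⊆ W.biUnion (fun w => (M u).filter (fun x => ∃ y ∈ M w, C.H.Adj x y)) := by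
    intro x hx
    obtain ⟨w, hw, y, hy, hxy⟩ := hcon x hx
    simp only [Finset.mem_biUnion, Finset.mem_filter]
    exact ⟨w, hw, hx, y, hy, hxy⟩
  have hcard : ∀ w ∈ W,
      ((M u).filter (fun x => ∃ y ∈ M w, C.H.Adj x y)).card ≤ (M w).card := by
    intro w hw
    refine Finset.card_le_card_of_forall_subsingleton (fun x y => C.H.Adj x y) ?_ ?_
    · intro x hx
      exact (Finset.mem_filter.mp hx).2
    · intro y hy x hx x' hx'
      exact C.matching w u (hW w hw).symm y (hM w hy)
        x (hM u (Finset.mem_filter.mp hx.1).1) x' (hM u (Finset.mem_filter.mp hx'.1).1)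
        hx.2.symm hx'.2.symm
  have := (Finset.card_le_card hsub).trans
    (Finset.card_biUnion_le.trans (Finset.sum_le_sum hcard))
  omega

/-- Removing from a list the neighbours of a colour `x` over an adjacent vertex, and possibly one
further colour, makes the list exactly one shorter. -/
lemma exists_shrunk_list {G : SimpleGraph V} (C : Cover G) (u v : V) (huv : G.Adj u v)
    (x : C.U) (hx : x ∈ C.L u) (N : Finset C.U) (hN : N ⊆ C.L v) :
    ∃ N' ⊆ N, N'.card = N.card - 1 ∧ ∀ y ∈ N', ¬ C.H.Adj x y := by
  have hone : (N.filter (fun y => C.H.Adj x y)).card ≤ 1 := by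
    rw [Finset.card_le_one]
    intro y hy y' hy'
    rw [Finset.mem_filter] at hy hy'
    exact C.matching u v huv x hx y (hN hy.1) y' (hN hy'.1) hy.2 hy'.2
  have hsum := Finset.card_filter_add_card_filter_not (s := N) (fun y => C.H.Adj x y)
  obtain ⟨N', hN', hc⟩ := Finset.exists_subset_card_eq
    (s := N.filter (fun y => ¬ C.H.Adj x y)) (n := N.card - 1) (by omega)
  exact ⟨N', hN'.trans (Finset.filter_subset _ _), hc,
    fun y hy => (Finset.mem_filter.mp (hN' hy)).2⟩

/-- The greedy induction. `M v` is the list of colours still admissible at the active vertex `v`;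
the colouring produced takes all its colours from the lists of active vertices. -/
lemma exists_coloring {G : SimpleGraph V} (C : Cover G) (l : List (V × Finset V)) :
    ∀ (st : State V) (M : V → Finset C.U), (∀ v, 1 ≤ st.T v) → (∀ v, M v ⊆ C.L v) →
      (∀ v ∈ st.A, (M v).card = st.S v + st.T v) → LegalSeq G st l →
      (finalState G st l).A = ∅ →
      ∃ I : Finset C.U, (∀ x ∈ I, ∀ y ∈ I, ¬ C.H.Adj x y) ∧
        (∀ x ∈ I, ∃ v ∈ st.A, x ∈ M v) ∧ ∀ v ∈ st.A, (I ∩ C.L v).card = st.T v := by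
  induction l with
  | nil =>
    intro st M _ _ _ _ hfin
    have hA : st.A = ∅ := hfin
    exact ⟨∅, by simp, by simp, by simp [hA]⟩
  | cons op rest ih =>
    intro st M hT hM hcard hleg hfin
    obtain ⟨u, W⟩ := op
    obtain ⟨⟨hu, hW, hlt, hS⟩, hrest⟩ := hleg
    dsimp only at hu hW hlt hS hrest
    have hlt' : ∑ w ∈ W, (M w).card < (M u).card := by
      rw [hcard u hu, Finset.sum_congr rfl (fun w hw => hcard w (hW w hw).1)]
      exact hlt
    obtain ⟨x, hxM, hxW⟩ := exists_free_color C M hM u W (fun w hw => (hW w hw).2) hlt'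
    have hxL := hM u hxM
    have huniq : ∀ v, x ∈ C.L v → v = u := fun v hv => (C.part x).unique hv hxL
    have hshrink : ∀ v, ∃ N' ⊆ M v, G.Adj u v →
        N'.card = (M v).card - 1 ∧ ∀ y ∈ N', ¬ C.H.Adj x y := by
      intro v
      by_cases h : G.Adj u v
      · obtain ⟨N', h1, h2⟩ := exists_shrunk_list C u v h x hxL (M v) (hM v)
        exact ⟨N', h1, fun _ => h2⟩
      · exact ⟨M v, subset_rfl, fun h' => absurd h' h⟩
    choose N hNM hN using hshrink
    let M' : V → Finset C.U := fun v =>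
      if v = u then (M u).erase x else
        if G.Adj u v ∧ v ∈ st.A ∧ v ∉ W then N v else M v
    have hM'M : ∀ v, M' v ⊆ M v := by
      intro v
      dsimp only [M']
      split_ifs with h1 h2
      · subst h1
        exact Finset.erase_subset _ _
      · exact hNM v
      · exact subset_rfl
    have hA' : ∀ v ∈ (applyStep G st u W).A, v ∈ st.A := by
      intro v hv
      dsimp only [applyStep] at hv
      split_ifs at hv
      · exact Finset.mem_of_mem_erase hv
      · exact hv
    have hT' : ∀ v, 1 ≤ (applyStep G st u W).T v := by
      intro v
      dsimp only [applyStep]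
      split_ifs with h
      · omega
      · exact hT v
    have hcard' : ∀ v ∈ (applyStep G st u W).A,
        (M' v).card = (applyStep G st u W).S v + (applyStep G st u W).T v := by
      intro v hv
      have hvA := hA' v hv
      by_cases hvu : v = u
      · subst hvu
        -- A vertex surviving its own operation has target at least two.
        have hT1 : 1 < st.T v := by
          have := hT v
          by_contra hcon
          have h1 : st.T v = 1 := by omega
          simp [applyStep, h1] at hv
        have hc := hcard v hvA
        simp only [M', applyStep, if_true, SimpleGraph.irrefl, false_and, if_false, hT1,
          and_self, Finset.card_erase_of_mem hxM]
        omega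
      · have hc := hcard v hvA
        simp only [M', applyStep, hvu, if_false, false_and]
        split_ifs with h
        · rw [(hN v h.1).1, hc]
          have := hS v hvA h.1 h.2.2
          omega
        · exact hc
    obtain ⟨I, hI, hIM, hIT⟩ := ih (applyStep G st u W) M' hT'
      (fun v => (hM'M v).trans (hM v)) hcard' hrest hfin
    have hxI : x ∉ I := by
      intro hx
      obtain ⟨v, _, hv⟩ := hIM x hx
      have hvu := huniq v (hM v (hM'M v hv))
      subst hvu
      simp [M'] at hv
    have hxadj : ∀ y ∈ I, ¬ C.H.Adj x y := by
      intro y hy hxy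
      obtain ⟨v, hvA, hv⟩ := hIM y hy
      have hyM := hM'M v hv
      have hadj := C.cross u v x hxL y (hM v hyM) hxy
      have hvu : v ≠ u := hadj.ne'
      by_cases hvW : v ∈ W
      · exact hxW v hvW y hyM hxy
      · simp only [M', hvu, if_false, hadj, hA' v hvA, hvW, not_false_eq_true, and_self,
          if_true] at hv
        exact (hN v hadj).2 y hv hxy
    refine ⟨insert x I, ?_, ?_, ?_⟩
    · intro y hy z hz hyz
      rw [Finset.mem_insert] at hy hz
      rcases hy with rfl | hy <;> rcases hz with rfl | hz
      · exact C.H.irrefl hyz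
      · exact hxadj z hz hyz
      · exact hxadj y hy hyz.symm
      · exact hI y hy z hz hyz
    · intro y hy
      rcases Finset.mem_insert.mp hy with rfl | hy
      · exact ⟨u, hu, hxM⟩
      · obtain ⟨v, hvA, hv⟩ := hIM y hy
        exact ⟨v, hA' v hvA, hM'M v hv⟩
    · intro v hvA
      by_cases hvu : v = u
      · subst hvu
        rw [Finset.insert_inter_of_mem hxL,
          Finset.card_insert_of_notMem (fun h => hxI (Finset.mem_inter.mp h).1)]
        by_cases h1 : st.T v = 1
        -- A vertex with target one is deleted and, lists being disjoint, receives no other colour.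
        · have hempty : I ∩ C.L v = ∅ := by
            rw [Finset.eq_empty_iff_forall_notMem]
            intro y hy
            rw [Finset.mem_inter] at hy
            obtain ⟨w, hwA, hw⟩ := hIM y hy.1
            have hwv : w = v := (C.part y).unique (hM w (hM'M w hw)) hy.2
            subst hwv
            simp [applyStep, h1] at hwA
          rw [hempty, h1, Finset.card_empty]
        · have hT1 := hT v
          have hgt : 1 < st.T v := by omega
          rw [hIT v (by simpa [applyStep, h1] using hvA)]
          simp only [applyStep, hgt, and_self, if_true]
          omega
      · have hxv : x ∉ C.L v := fun h => hvu (huniq v h)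
        rw [Finset.insert_inter_of_notMem hxv, hIT v (by
          dsimp only [applyStep]
          split_ifs
          · exact Finset.mem_erase.mpr ⟨hvu, hvA⟩
          · exact hvA)]
        simp [applyStep, hvu]

lemma ST3Deg.dpColorableFn [Fintype V] {G : SimpleGraph V} {S T : V → ℕ}
    (hT : ∀ v, 1 ≤ T v) (h : ST3Deg G S T) : DPColorableFn G (fun v => S v + T v) T := by
  intro C hC
  obtain ⟨l, hl, hfin⟩ := h
  obtain ⟨I, hI, _, hIT⟩ := exists_coloring C l ⟨Finset.univ, S, T⟩ C.L hT
    (fun _ => subset_rfl) (fun v _ => hC v) hl hfin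
  exact ⟨I, hI, fun v => hIT v (Finset.mem_univ v)⟩

/-- Suppose `S` and `T` are a shield and a target of a graph `G`.  If `G` is
`ST⁽³⁾`-`(S,T)`-degenerate, then `G` is `(S+T, T)`-DP-colorable.  Consequently, if `G` is
`ST⁽³⁾`-`(s,t)`-degenerate for integers `s ≥ 0` and `t ≥ 1`, then `χ*_DP(G) ≤ (s+t)/t`. -/
theorem st3Deg_implies_dp {V : Type} [Fintype V] (G : SimpleGraph V)
    (S T : V → ℕ) (hT : ∀ v, 1 ≤ T v) :
    (ST3Deg G S T → DPColorableFn G (fun v => S v + T v) T) ∧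
    (∀ s t : ℕ, 1 ≤ t → ST3Deg G (fun _ => s) (fun _ => t) →
      DPStar G ≤ ((s : ℝ) + t) / t) := by
  refine ⟨fun h => h.dpColorableFn hT, fun s t ht h => ?_⟩
  refine csInf_le ⟨0, ?_⟩ ⟨s + t, t, ht, Nat.le_add_left t s, ?_, by push_cast; rfl⟩
  · rintro _ ⟨a, b, _, _, _, rfl⟩
    positivity
  · intro C hC
    obtain ⟨I, hI, hIt⟩ := h.dpColorableFn (fun _ => ht) C hC
    exact ⟨I, hI, fun v => (hIt v).ge⟩

end StrictDeg
end
end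

section
/- Suppose G is a nonempty graph with shield S and target T. Suppose G' is a graph such that V(G') = V(G) ∪ {z} for some z ∉ V(G) and the induced subgraph G'[V(G)] equals G. Suppose S' and T' are a shield and a target of G' with S'(v) = S(v) and T'(v) = T(v) for all v ∈ V(G), and S'(z) ≥ Σ_{v ∈ N_{G'}(z)} T(v). Then: (i) if G is ST^(3)-(S,T)-degenerate then G' is ST^(3)-(S',T')-degenerate, and (ii) if G is ST^(4)-(S,T)-degenerate then G' is ST^(4)-(S',T')-degenerate. -/
/-!
Replay on `G'` the given complete legal sequence of `G`, with the same saved sets, never saving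
the new vertex `z`; then remove `z` by operations that save nothing.

The old vertices have the same shields and targets in `G'` as in `G` throughout, so the only new
legality requirement is that the shield of `z` stays nonnegative. Each operation at a neighbor `v`
of `z` lowers the shield of `z` by one, and it also lowers the remaining demand of `v` by one: its
target drops, or `v` leaves the graph when its target is `1`. Hence the inequality
`∑ T(v) ≤ S'(z)`, summed over the neighbors `v` of `z` still in the graph, is invariant, and at an
operation on a neighbor its left-hand side is at least `1`. This is `exists_lift_seq`, an
induction along the sequence; once only `z` remains, `exists_clear_last` finishes.
-/

open scoped Classical

noncomputable section

namespace StrictDeg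

variable {V : Type}

/-- A single remaining vertex `z` is removed by operations at `z` that save nothing. -/
lemma exists_clear_last (G : SimpleGraph V) (z : V) (n : ℕ) :
    ∀ st : State V, st.A = {z} → st.T z = n + 1 →
      ∃ l : List (V × Finset V), LegalSeq G st l ∧ (∀ op ∈ l, op.2.card ≤ 1) ∧
        (finalState G st l).A = ∅ := by
  have hlegal : ∀ st : State V, st.A = {z} → 1 ≤ st.T z → LegalStep G st z ∅ := by
    intro st hA hT
    refine ⟨by simp [hA], by simp, by simp; omega, ?_⟩
    intro v hv hadj
    rw [hA, Finset.mem_singleton] at hv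
    exact absurd (hv ▸ hadj) (G.loopless.irrefl _)
  induction n with
  | zero =>
    intro st hA hT
    exact ⟨[(z, ∅)], ⟨hlegal st hA (by omega), trivial⟩, by simp,
      by simp [finalState, applyStep, hA, hT]⟩
  | succ n ih =>
    intro st hA hT
    obtain ⟨l, h1, h2, h3⟩ := ih (applyStep G st z ∅)
      (by simp [applyStep, hA, hT]) (by simp [applyStep, hT])
    refine ⟨(z, ∅) :: l, ⟨hlegal st hA (by omega), h1⟩, ?_, h3⟩
    intro op hop
    rcases List.mem_cons.1 hop with rfl | hop
    · simp
    · exact h2 op hop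

/-- An operation at `u` lowers the total target of the active vertices satisfying `p` by exactly
one if `p u` holds, and leaves it unchanged otherwise. It is applied with `p` the adjacency to the
new vertex. -/
lemma demand_applyStep (G : SimpleGraph V) (p : V → Prop) (st : State V) (u : V) (W : Finset V)
    (hu : u ∈ st.A) (hT : 1 ≤ st.T u) :
    (∑ v ∈ (applyStep G st u W).A, if p v then (applyStep G st u W).T v else 0)
      + (if p u then 1 else 0) = ∑ v ∈ st.A, if p v then st.T v else 0 := by
  have herase : (∑ v ∈ st.A.erase u, if p v then (applyStep G st u W).T v else 0)
      = ∑ v ∈ st.A.erase u, if p v then st.T v else 0 := by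
    refine Finset.sum_congr rfl fun v hv => ?_
    simp [applyStep, Finset.ne_of_mem_erase hv]
  rw [← Finset.sum_erase_add st.A _ hu, ← herase]
  by_cases h1 : st.T u = 1
  · have hA : (applyStep G st u W).A = st.A.erase u := by simp [applyStep, h1]
    rw [hA, h1]
  · have hA : (applyStep G st u W).A = st.A := by simp [applyStep, h1]
    have hTu : (applyStep G st u W).T u = st.T u - 1 := by
      have : 1 < st.T u := by omega
      simp [applyStep, this]
    rw [hA, ← Finset.sum_erase_add st.A _ hu, hTu]
    split_ifs <;> omega

/-- A complete legal sequence of `G` from `st` yields one of `G'` from any state `st'` that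
extends `st` by the vertex `none` and in which the shield of `none` covers the total target of
its active neighbors. The latter condition is the invariant of the induction. -/
lemma exists_lift_seq (G : SimpleGraph V) (G' : SimpleGraph (Option V))
    (hind : ∀ u v : V, G'.Adj (some u) (some v) ↔ G.Adj u v) (l : List (V × Finset V)) :
    ∀ (st : State V) (st' : State (Option V)),
      (∀ v, some v ∈ st'.A ↔ v ∈ st.A) → none ∈ st'.A →
      (∀ v, st'.S (some v) = st.S v) → (∀ v, st'.T (some v) = st.T v) →
      (∀ v, 1 ≤ st.T v) → 1 ≤ st'.T none →
      (∑ v ∈ st.A, if G'.Adj none (some v) then st.T v else 0) ≤ st'.S none →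
      LegalSeq G st l → (finalState G st l).A = ∅ →
      ∃ l' : List (Option V × Finset (Option V)), LegalSeq G' st' l' ∧
        ((∀ op ∈ l, op.2.card ≤ 1) → ∀ op ∈ l', op.2.card ≤ 1) ∧
        (finalState G' st' l').A = ∅ := by
  induction l with
  | nil =>
    intro st st' hA hz hS hT hT1 hTz hsum hleg hfin
    have hA' : st'.A = {none} := by
      change st.A = ∅ at hfin
      ext x
      cases x with
      | none => simp [hz]
      | some v => simp [hA, hfin]
    obtain ⟨l', h1, h2, h3⟩ := exists_clear_last G' none (st'.T none - 1) st' hA' (by omega)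
    exact ⟨l', h1, fun _ => h2, h3⟩
  | cons op l ih =>
    intro st st' hA hz hS hT hT1 hTz hsum hleg hfin
    obtain ⟨u, W⟩ := op
    obtain ⟨⟨hu, hW, hlt, hsh⟩, hrest⟩ := hleg
    dsimp only at hu hW hlt hsh hrest
    have hdem := demand_applyStep G (fun v => G'.Adj none (some v)) st u W hu (hT1 u)
    set W' : Finset (Option V) := W.map Function.Embedding.some with hW'
    have memW : ∀ v, some v ∈ W' ↔ v ∈ W := by simp [hW']
    have nmemW : none ∉ W' := by simp [hW']
    have hstep : LegalStep G' st' (some u) W' := by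
      refine ⟨(hA u).2 hu, ?_, ?_, ?_⟩
      · intro w hw
        obtain ⟨v, hv, rfl⟩ := Finset.mem_map.1 hw
        exact ⟨(hA v).2 (hW v hv).1, (hind u v).2 (hW v hv).2⟩
      · simpa [hW', Finset.sum_map, hS, hT] using hlt
      · intro x hx hadj hxW
        cases x with
        | none =>
          rw [if_pos hadj.symm] at hdem
          omega
        | some v =>
          rw [hS]
          exact hsh v ((hA v).1 hx) ((hind u v).1 hadj) (fun h => hxW ((memW v).2 h))
    have hSz : (applyStep G' st' (some u) W').S none
        = st'.S none - if G'.Adj none (some u) then 1 else 0 := by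
      by_cases h : G'.Adj none (some u)
      · simp [applyStep, h, h.symm, hz, nmemW]
      · have h' : ¬ G'.Adj (some u) none := fun k => h k.symm
        simp [applyStep, h, h']
    obtain ⟨l', h1, h2, h3⟩ := ih (applyStep G st u W) (applyStep G' st' (some u) W')
      (by
        intro v
        by_cases h : st.T u = 1 <;> simp [applyStep, hT, h, hA])
      (by by_cases h : st.T u = 1 <;> simp [applyStep, hT, h, hz])
      (by intro v; simp [applyStep, hS, hA, memW, hind])
      (by intro v; simp [applyStep, hT])
      (by
        intro v
        have := hT1 v
        simp only [applyStep]
        split_ifs <;> omega)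
      (by simpa [applyStep] using hTz)
      (by rw [hSz]; omega)
      hrest hfin
    refine ⟨(some u, W') :: l', ⟨hstep, h1⟩, ?_, h3⟩
    intro hcard op hop
    rcases List.mem_cons.1 hop with rfl | hop
    · simpa [hW'] using hcard (u, W) (by simp)
    · exact h2 (fun o ho => hcard o (List.mem_cons_of_mem _ ho)) op hop

/-- Suppose `G` is a nonempty graph with shield `S` and target `T`.  Suppose
`G'` is a graph whose vertex set is that of `G` together with one new vertex `z` (here `G'` is
a graph on `Option V`, `z = none`, and the induced subgraph of `G'` on the old vertices is
`G`).  Suppose `S'` and `T'` are a shield and a target of `G'` agreeing with `S` and `T` on the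
old vertices, and `S'(z) ≥ Σ_{v ∈ N_{G'}(z)} T(v)`.  Then (i) if `G` is
`ST⁽³⁾`-`(S,T)`-degenerate then `G'` is `ST⁽³⁾`-`(S',T')`-degenerate, and (ii) if `G` is
`ST⁽⁴⁾`-`(S,T)`-degenerate then `G'` is `ST⁽⁴⁾`-`(S',T')`-degenerate. -/
theorem stDeg_append_vertex {V : Type} [Fintype V] [Nonempty V]
    (G : SimpleGraph V) (G' : SimpleGraph (Option V))
    (hind : ∀ u v : V, G'.Adj (some u) (some v) ↔ G.Adj u v)
    (S T : V → ℕ) (hT : ∀ v, 1 ≤ T v)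
    (S' T' : Option V → ℕ) (hT' : ∀ v, 1 ≤ T' v)
    (hS'eq : ∀ v : V, S' (some v) = S v) (hT'eq : ∀ v : V, T' (some v) = T v)
    (hz : (∑ v ∈ Finset.univ.filter (fun v : V => G'.Adj none (some v)), T v) ≤ S' none) :
    (ST3Deg G S T → ST3Deg G' S' T') ∧ (ST4Deg G S T → ST4Deg G' S' T') := by
  have key := fun l => exists_lift_seq G G' hind l ⟨Finset.univ, S, T⟩ ⟨Finset.univ, S', T'⟩
    (by simp) (by simp) hS'eq hT'eq hT (hT' none) (by rwa [← Finset.sum_filter])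
  constructor
  · rintro ⟨l, hl, hfin⟩
    obtain ⟨l', h1, -, h3⟩ := key l hl hfin
    exact ⟨l', h1, h3⟩
  · rintro ⟨l, hl, hcard, hfin⟩
    obtain ⟨l', h1, h2, h3⟩ := key l hl hfin
    exact ⟨l', h1, h2 hcard, h3⟩

end StrictDeg
end
end

section
/- For k ∈ ℕ and j ∈ {3,4}: if the k-core of a graph G is ST^(j)-(s,t)-degenerate for integers s ≥ 0 and t ≥ 1 with s ≥ (k−1)t, then G is ST^(j)-(s,t)-degenerate. -/
/-!
The vertices outside the `k`-core can be added back to it one at a time so that each new vertex `v`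
has at most `k - 1` neighbours in the set built so far (`exists_low_degree`). To extend a complete
sequence to `v`, run it unchanged and then operate `t` times on `v`, saving nothing. Each
neighbour of `v` is operated on exactly `t` times before it leaves the graph, so the shield of `v`
is lowered at most `(k - 1) * t ≤ s` times and never becomes negative. The invariant that makes
this precise is `Extends`: the shield of `v` is at least the sum of the remaining targets of its
active neighbours. Operations on vertices other than `v` are the old ones and those on `v` have
`W = ∅`, so restricted sequences extend to restricted sequences.
-/

open scoped Classical

noncomputable section

namespace StrictDeg

variable {V : Type}

/-- The vertex set of the `k`-core of `G`: the union of all vertex sets `A` such that every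
vertex of `A` has at least `k` neighbors in `A`; equivalently, the vertex set of the maximal
subgraph of `G` of minimum degree at least `k`. -/
def kCore {V : Type} [Fintype V] (G : SimpleGraph V) (k : ℕ) : Finset V :=
  Finset.univ.filter fun v => ∃ A : Finset V,
    (∀ u ∈ A, k ≤ (A.filter (G.Adj u)).card) ∧ v ∈ A

/-- `Extends G v t st st'` says that `st'` is the state `st` with one further, not yet processed
vertex `v` of target `t`, whose shield is large enough to absorb every operation still to be
performed on its active neighbours (`w` is operated on `st.T w` more times). -/
structure Extends (G : SimpleGraph V) (v : V) (t : ℕ) (st st' : State V) : Prop where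
  notMem : v ∉ st.A
  active : st'.A = insert v st.A
  shield : ∀ w, w ≠ v → st'.S w = st.S w
  target : ∀ w, w ≠ v → st'.T w = st.T w
  target_new : st'.T v = t
  target_pos : ∀ w ∈ st.A, 1 ≤ st.T w
  budget : ∑ w ∈ st.A.filter (G.Adj v), st.T w ≤ st'.S v

/-- A step on a neighbour `u` of `v` lowers the total remaining target of the active neighbours
of `v` by at least one, which pays for the unit of shield that `v` loses in that step. -/
theorem budget_step (G : SimpleGraph V) (v : V) (st : State V) (u : V) (W : Finset V)
    (hu : u ∈ st.A) (hpos : 1 ≤ st.T u) :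
    (∑ w ∈ (applyStep G st u W).A.filter (G.Adj v), (applyStep G st u W).T w)
      + (if G.Adj u v then 1 else 0) ≤ ∑ w ∈ st.A.filter (G.Adj v), st.T w := by
  have hrest : ∑ w ∈ (st.A.filter (G.Adj v)).erase u, (applyStep G st u W).T w
      = ∑ w ∈ (st.A.filter (G.Adj v)).erase u, st.T w := by
    refine Finset.sum_congr rfl fun w hw => ?_
    simp [applyStep, (Finset.mem_erase.1 hw).1]
  by_cases huv : G.Adj u v
  · have humem : u ∈ st.A.filter (G.Adj v) := Finset.mem_filter.2 ⟨hu, huv.symm⟩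
    rw [← Finset.add_sum_erase _ st.T humem, if_pos huv]
    by_cases h1 : st.T u = 1
    · have hA : (applyStep G st u W).A.filter (G.Adj v) = (st.A.filter (G.Adj v)).erase u := by
        simp [applyStep, h1, Finset.filter_erase]
      rw [hA, hrest]
      omega
    · have hA : (applyStep G st u W).A = st.A := by simp [applyStep, h1]
      have hT : (applyStep G st u W).T u = st.T u - 1 := by
        simp only [applyStep, true_and]
        split_ifs <;> omega
      rw [hA, ← Finset.add_sum_erase _ _ humem, hrest, hT]
      omega
  · have hnot : u ∉ st.A.filter (G.Adj v) := fun h => huv (Finset.mem_filter.1 h).2.symm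
    have hA : (applyStep G st u W).A.filter (G.Adj v) = (st.A.filter (G.Adj v)).erase u := by
      rw [Finset.erase_eq_of_notMem hnot]
      simp only [applyStep]
      split_ifs
      · rw [Finset.filter_erase, Finset.erase_eq_of_notMem hnot]
      · rfl
    rw [hA, hrest, Finset.erase_eq_of_notMem hnot, if_neg huv, add_zero]

theorem Extends.legalStep {G : SimpleGraph V} {v : V} {t : ℕ} {st st' : State V}
    (h : Extends G v t st st') {u : V} {W : Finset V} (hl : LegalStep G st u W) :
    LegalStep G st' u W := by
  obtain ⟨hu, hW, hsum, hsh⟩ := hl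
  have ne : ∀ w ∈ st.A, w ≠ v := fun w hw e => h.notMem (e ▸ hw)
  refine ⟨by rw [h.active]; exact Finset.mem_insert_of_mem hu,
    fun w hw => ⟨by rw [h.active]; exact Finset.mem_insert_of_mem (hW w hw).1, (hW w hw).2⟩,
    ?_, ?_⟩
  · rw [h.shield u (ne u hu), h.target u (ne u hu)]
    refine lt_of_eq_of_lt (Finset.sum_congr rfl fun w hw => ?_) hsum
    rw [h.shield w (ne w (hW w hw).1), h.target w (ne w (hW w hw).1)]
  · intro w hw huw hwW
    rw [h.active, Finset.mem_insert] at hw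
    rcases hw with rfl | hw
    · have hmem : u ∈ st.A.filter (G.Adj w) := Finset.mem_filter.2 ⟨hu, huw.symm⟩
      exact (h.target_pos u hu).trans
        ((Finset.single_le_sum (f := st.T) (fun _ _ => Nat.zero_le _) hmem).trans h.budget)
    · rw [h.shield w (ne w hw)]
      exact hsh w hw huw hwW

theorem Extends.applyStep {G : SimpleGraph V} {v : V} {t : ℕ} {st st' : State V}
    (h : Extends G v t st st') {u : V} {W : Finset V} (hl : LegalStep G st u W) :
    Extends G v t (applyStep G st u W) (applyStep G st' u W) := by
  obtain ⟨hu, hW, -, -⟩ := hl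
  have ne : ∀ w ∈ st.A, w ≠ v := fun w hw e => h.notMem (e ▸ hw)
  have huv : u ≠ v := ne u hu
  have hvW : v ∉ W := fun hv => h.notMem (hW v hv).1
  have hTu := h.target u huv
  have hpos := h.target_pos u hu
  have hsub : (StrictDeg.applyStep G st u W).A ⊆ st.A := by
    simp only [StrictDeg.applyStep]
    split_ifs
    · exact Finset.erase_subset _ _
    · exact Finset.Subset.refl _
  refine ⟨fun hv => h.notMem (hsub hv), ?_, ?_, ?_, ?_, ?_, ?_⟩
  · simp only [StrictDeg.applyStep, hTu, h.active]
    split_ifs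
    · rw [Finset.erase_insert_of_ne huv.symm]
    · rfl
  · intro w hw
    simp only [StrictDeg.applyStep, h.shield w hw, h.active, Finset.mem_insert, hw, false_or]
  · intro w hw
    simp only [StrictDeg.applyStep, hTu, h.target w hw]
  · simp only [StrictDeg.applyStep, huv.symm, false_and, if_false, h.target_new]
  · intro w hw
    have := h.target_pos w (hsub hw)
    simp only [StrictDeg.applyStep]
    split_ifs <;> omega
  · have hb := budget_step G v st u W hu hpos
    have hS : (StrictDeg.applyStep G st' u W).S v = st'.S v - (if G.Adj u v then 1 else 0) := by
      by_cases huv' : G.Adj u v <;> simp [StrictDeg.applyStep, h.active, hvW, huv']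
    have := h.budget
    rw [hS]
    omega

/-- A lone vertex of target `n + 1` is removed by `n + 1` operations that save nothing. -/
theorem exists_seq_singleton (G : SimpleGraph V) (v : V) (n : ℕ) (st : State V)
    (hA : st.A = {v}) (hT : st.T v = n + 1) :
    ∃ l : List (V × Finset V), LegalSeq G st l ∧ (finalState G st l).A = ∅ ∧
      ∀ op ∈ l, op.2 = ∅ := by
  have hstep : LegalStep G st v ∅ := by
    refine ⟨by simp [hA], by simp, by rw [Finset.sum_empty]; omega, ?_⟩
    intro w hw hvw
    rw [hA, Finset.mem_singleton] at hw
    exact absurd (hw ▸ hvw) (G.loopless.irrefl v)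
  induction n generalizing st with
  | zero =>
    refine ⟨[(v, ∅)], ⟨hstep, trivial⟩, ?_, by simp⟩
    simp [finalState, StrictDeg.applyStep, hT, hA]
  | succ n ih =>
    have hA' : (StrictDeg.applyStep G st v ∅).A = {v} := by simp [StrictDeg.applyStep, hT, hA]
    have hT' : (StrictDeg.applyStep G st v ∅).T v = n + 1 := by
      simp [StrictDeg.applyStep, hT]
    obtain ⟨l, hl, hfin, hop⟩ := ih (StrictDeg.applyStep G st v ∅) hA' hT' (by
      refine ⟨by simp [hA'], by simp, by rw [Finset.sum_empty]; omega, ?_⟩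
      intro w hw hvw
      rw [hA', Finset.mem_singleton] at hw
      exact absurd (hw ▸ hvw) (G.loopless.irrefl v))
    exact ⟨(v, ∅) :: l, ⟨hstep, hl⟩, hfin, by simpa using hop⟩

/-- A complete sequence for `st` can be followed by operations on the extra vertex `v` to give a
complete sequence for any extension `st'`. -/
theorem Extends.exists_seq {G : SimpleGraph V} {v : V} {t : ℕ} (ht : 1 ≤ t)
    (l : List (V × Finset V)) : ∀ {st st' : State V}, Extends G v t st st' →
    LegalSeq G st l → (finalState G st l).A = ∅ →
    ∃ l' : List (V × Finset V), LegalSeq G st' l' ∧ (finalState G st' l').A = ∅ ∧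
      ∀ op ∈ l', op ∈ l ∨ op.2 = ∅ := by
  induction l with
  | nil =>
    intro st st' h _ hfin
    have hA : st.A = ∅ := hfin
    obtain ⟨l', h1, h2, h3⟩ := exists_seq_singleton G v (t - 1) st'
      (by simp [h.active, hA]) (by rw [h.target_new]; omega)
    exact ⟨l', h1, h2, fun op hop => Or.inr (h3 op hop)⟩
  | cons op l ih =>
    intro st st' h hl hfin
    obtain ⟨l', h1, h2, h3⟩ := ih (h.applyStep hl.1) hl.2 hfin
    refine ⟨op :: l', ⟨h.legalStep hl.1, h1⟩, h2, ?_⟩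
    intro o ho
    rcases List.mem_cons.1 ho with rfl | ho
    · exact Or.inl List.mem_cons_self
    · exact (h3 o ho).imp_left (List.mem_cons_of_mem _)

/-- A vertex set that strictly contains the `k`-core has a vertex outside the core with fewer than
`k` neighbours in the set; otherwise the set would itself be contained in the core. -/
theorem exists_low_degree [Fintype V] (G : SimpleGraph V) (k : ℕ) (B : Finset V)
    (hsub : kCore G k ⊆ B) (hne : B ≠ kCore G k) :
    ∃ v ∈ B, v ∉ kCore G k ∧ (B.filter (G.Adj v)).card < k := by
  by_contra! hcon
  refine hne (Finset.Subset.antisymm (fun v hv => ?_) hsub)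
  refine Finset.mem_filter.2 ⟨Finset.mem_univ _, B, fun u hu => ?_, hv⟩
  by_cases huc : u ∈ kCore G k
  · obtain ⟨-, A, hA, huA⟩ := Finset.mem_filter.1 huc
    have hAB : A ⊆ B := fun w hw =>
      hsub (Finset.mem_filter.2 ⟨Finset.mem_univ _, A, hA, hw⟩)
    exact (hA u huA).trans (Finset.card_le_card (Finset.filter_subset_filter _ hAB))
  · exact hcon u hu huc

/-- A complete sequence for the `k`-core yields one for every larger vertex set, all of whose
operations either come from the given sequence or save nothing. -/
theorem exists_seq_of_kCore [Fintype V] (G : SimpleGraph V) (k s t : ℕ) (ht : 1 ≤ t)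
    (hst : (k - 1) * t ≤ s) (l : List (V × Finset V))
    (hl : LegalSeq G ⟨kCore G k, fun _ => s, fun _ => t⟩ l)
    (hfin : (finalState G ⟨kCore G k, fun _ => s, fun _ => t⟩ l).A = ∅)
    (B : Finset V) (hB : kCore G k ⊆ B) :
    ∃ l' : List (V × Finset V), LegalSeq G ⟨B, fun _ => s, fun _ => t⟩ l' ∧
      (finalState G ⟨B, fun _ => s, fun _ => t⟩ l').A = ∅ ∧
      ∀ op ∈ l', op ∈ l ∨ op.2 = ∅ := by
  induction B using Finset.strongInduction with
  | H B ih =>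
    by_cases hne : B = kCore G k
    · exact hne ▸ ⟨l, hl, hfin, fun op hop => Or.inl hop⟩
    obtain ⟨v, hvB, hvc, hdeg⟩ := exists_low_degree G k B hB hne
    obtain ⟨l₁, h1, h2, h3⟩ := ih (B.erase v) (Finset.erase_ssubset hvB)
      (Finset.subset_erase.2 ⟨hB, hvc⟩)
    have hext : Extends G v t ⟨B.erase v, fun _ => s, fun _ => t⟩
        ⟨B, fun _ => s, fun _ => t⟩ := by
      refine ⟨Finset.notMem_erase v B, (Finset.insert_erase hvB).symm, fun _ _ => rfl,
        fun _ _ => rfl, rfl, fun _ _ => ht, ?_⟩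
      have hcard : ((B.erase v).filter (G.Adj v)).card ≤ k - 1 :=
        (Finset.card_le_card (Finset.filter_subset_filter _ (Finset.erase_subset v B))).trans
          (Nat.le_sub_one_of_lt hdeg)
      simpa only [Finset.sum_const, smul_eq_mul] using
        (Nat.mul_le_mul_right t hcard).trans hst
    obtain ⟨l₂, g1, g2, g3⟩ := hext.exists_seq ht l₁ h1 h2
    exact ⟨l₂, g1, g2, fun op hop => (g3 op hop).elim (h3 op) Or.inr⟩

/-- For `k ∈ ℕ` and `j ∈ {3,4}`: if the `k`-core of a graph `G` is
`ST⁽ʲ⁾`-`(s,t)`-degenerate for integers `s ≥ 0` and `t ≥ 1` with `s ≥ (k−1)t`, then `G` is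
`ST⁽ʲ⁾`-`(s,t)`-degenerate. -/
theorem stDeg_of_kCore {V : Type} [Fintype V] (G : SimpleGraph V)
    (k : ℕ) (hk : 1 ≤ k) (s t : ℕ) (ht : 1 ≤ t) (hst : (k - 1) * t ≤ s) :
    (ST3DegOn G (kCore G k) (fun _ => s) (fun _ => t) →
      ST3Deg G (fun _ => s) (fun _ => t)) ∧
    (ST4DegOn G (kCore G k) (fun _ => s) (fun _ => t) →
      ST4Deg G (fun _ => s) (fun _ => t)) := by
  constructor
  · rintro ⟨l, hl, hfin⟩
    obtain ⟨l', h1, h2, -⟩ := exists_seq_of_kCore G k s t ht hst l hl hfin Finset.univ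
      (Finset.subset_univ _)
    exact ⟨l', h1, h2⟩
  · rintro ⟨l, hl, hcard, hfin⟩
    obtain ⟨l', h1, h2, h3⟩ := exists_seq_of_kCore G k s t ht hst l hl hfin Finset.univ
      (Finset.subset_univ _)
    refine ⟨l', h1, fun op hop => ?_, h2⟩
    rcases h3 op hop with h | h
    · exact hcard op h
    · simp [h]

end StrictDeg
end
end

section
/- For r ∈ ℕ, let G = P_{2r−1} be the path whose vertices in order are v_1,…,v_{2r−1}. Let S be the shield of G defined by S(v_1) = S(v_{2r−1}) = 1 and S(v_i) = r+1 for all i with 2 ≤ i ≤ 2r−2, and let T be the target of G defined by T(v_i) = r for all i ∈ {1,…,2r−1}. Then G is ST^(4)-(S,T)-degenerate. -/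
/-!
Write `v_1, …, v_{2r-1}` for the path. All operations are first performed on the even-indexed
vertices `v_{2j}`, `1 ≤ j ≤ r - 1`, each operation saving exactly one of the two neighbors. Let
`a j` count the operations at `v_{2j}` that save the left neighbor `v_{2j-1}` (and hence shade
`v_{2j+1}`), and let `b j` count those that save the right neighbor `v_{2j+1}` (and shade `v_{2j-1}`).
Then `v_{2j}` keeps shield `r + 1` and has target `r - a j - b j`, while `v_{2j+1}` keeps target `r`
and has shield `r + 1 - a j - b (j+1)`; with the conventions `a 0 = r` and `b r = r` the last formula
also covers the two ends of the path, whose initial shield is `1`.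

In these terms, saving left at `v_{2j}` is legal when `a j < a (j-1)` and saving right is legal when
`b j < b (j+1)`, provided the shaded neighbor has positive shield. The aim is `a j = r - j` and
`b j = j`, which uses up the target of `v_{2j}` exactly. If some `a j` is below `r - j`, then saving
left is legal at the least such `j`, as there `a (j-1) = r - j + 1`; dually, if some `b j` is below `j`,
saving right is legal at the greatest such `j` (`exists_step`). Hence the process only stops once
every `v_{2j}` has been removed (`good_of_inv`), and the remaining vertices form an independent set,
which is removed with no saving at all (`good_of_indep`).
-/

open scoped Classical

noncomputable section

namespace StrictDeg

variable {V : Type}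

/-! ### Complete restricted sequences -/

/-- The induced subgraph described by `st` admits a complete restricted legal sequence. -/
def Good (G : SimpleGraph V) (st : State V) : Prop :=
  ∃ l : List (V × Finset V),
    LegalSeq G st l ∧ (∀ op ∈ l, op.2.card ≤ 1) ∧ (finalState G st l).A = ∅

lemma Good.step {G : SimpleGraph V} {st : State V} {u : V} {W : Finset V}
    (h : LegalStep G st u W) (hW : W.card ≤ 1) (hg : Good G (applyStep G st u W)) :
    Good G st := by
  obtain ⟨l, h1, h2, h3⟩ := hg
  refine ⟨(u, W) :: l, ⟨h, h1⟩, ?_, h3⟩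
  intro op hop
  rcases List.mem_cons.1 hop with rfl | hop
  · exact hW
  · exact h2 op hop

/-- Every operation lowers the total remaining target, so this total bounds the number of
operations still to come. -/
lemma sum_target_applyStep_lt (G : SimpleGraph V) (st : State V) (u : V) (W : Finset V)
    (hu : u ∈ st.A) (hT : 1 ≤ st.T u) :
    ∑ v ∈ (applyStep G st u W).A, (applyStep G st u W).T v < ∑ v ∈ st.A, st.T v := by
  by_cases h1 : st.T u = 1
  · have e : ∀ v, (applyStep G st u W).T v = st.T v := by
      intro v; simp [applyStep, h1]
    simp only [e]
    have hA : (applyStep G st u W).A = st.A.erase u := by simp [applyStep, h1]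
    rw [hA, ← Finset.add_sum_erase _ _ hu]
    omega
  · have hA : (applyStep G st u W).A = st.A := by simp [applyStep, h1]
    rw [hA]
    apply Finset.sum_lt_sum
    · intro v _
      simp only [applyStep]
      split_ifs with h
      · rw [h.1]; omega
      · exact le_rfl
    · refine ⟨u, hu, ?_⟩
      have : 1 < st.T u := by omega
      simp only [applyStep, this, and_self, if_true]
      omega

lemma good_of_indep (G : SimpleGraph V) (st : State V)
    (hind : ∀ u ∈ st.A, ∀ v ∈ st.A, ¬ G.Adj u v) (hT : ∀ u ∈ st.A, 1 ≤ st.T u) :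
    Good G st := by
  induction hn : ∑ v ∈ st.A, st.T v using Nat.strong_induction_on generalizing st with
  | _ n ih =>
    subst hn
    rcases st.A.eq_empty_or_nonempty with h0 | ⟨u, hu⟩
    · exact ⟨[], trivial, by simp, h0⟩
    have hsub : (applyStep G st u ∅).A ⊆ st.A := by
      simp only [applyStep]
      split_ifs
      · exact Finset.erase_subset _ _
      · exact subset_rfl
    refine Good.step (u := u) (W := ∅) ⟨hu, by simp, ?_, ?_⟩ (by simp)
      (ih _ (sum_target_applyStep_lt G st u ∅ hu (hT u hu)) _ ?_ ?_ rfl)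
    · have := hT u hu
      simp only [Finset.sum_empty]
      omega
    · exact fun v hv hadj => absurd hadj (hind u hu v hv)
    · exact fun x hx y hy => hind x (hsub hx) y (hsub hy)
    · intro v hv
      have := hT v (hsub hv)
      simp only [applyStep]
      split_ifs <;> omega

/-! ### Operations at the even-indexed vertices of the path -/

/-- The state of the path after `a j` left-saving and `b j` right-saving operations at `v_{2j}`.
Since indices in `Fin (2 * r - 1)` start at `0`, the vertex `v_{2j}` has index `2 * j - 1` and
`v_{2j+1}` has index `2 * j`. The values `a 0 = r` and `b r = r` are conventions that account for
the smaller shield of the two ends of the path. -/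
structure Inv (r : ℕ) (a b : ℕ → ℕ) (st : State (Fin (2 * r - 1))) : Prop where
  a_zero : a 0 = r
  b_last : b r = r
  a_le : ∀ j, j ≤ r → a j ≤ r - j
  b_le : ∀ j, j ≤ r → b j ≤ j
  mem_even : ∀ v : Fin (2 * r - 1), ∀ j, v.val + 1 = 2 * j → (v ∈ st.A ↔ a j + b j < r)
  tgt_even : ∀ v : Fin (2 * r - 1), ∀ j, v.val + 1 = 2 * j → v ∈ st.A →
    st.T v + a j + b j = r
  shd_even : ∀ v : Fin (2 * r - 1), ∀ j, v.val + 1 = 2 * j → v ∈ st.A → st.S v = r + 1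
  mem_odd : ∀ v : Fin (2 * r - 1), ∀ j, v.val = 2 * j → v ∈ st.A
  tgt_odd : ∀ v : Fin (2 * r - 1), ∀ j, v.val = 2 * j → st.T v = r
  shd_odd : ∀ v : Fin (2 * r - 1), ∀ j, v.val = 2 * j → st.S v + a j + b (j + 1) = r + 1

/-- Unless all counts have reached `a j = r - j` and `b j = j`, some `v_{2j}` can perform a
left-saving or a right-saving operation. -/
lemma exists_step {r : ℕ} {a b : ℕ → ℕ} (ha0 : a 0 = r) (hbr : b r = r)
    (ha : ∀ j, j ≤ r → a j ≤ r - j) (hb : ∀ j, j ≤ r → b j ≤ j) :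
    (∃ j, 1 ≤ j ∧ j < r ∧ a j < r - j ∧ a j < a (j - 1)) ∨
    (∃ j, 1 ≤ j ∧ j < r ∧ b j < j ∧ b j < b (j + 1)) ∨
    (∀ j, 1 ≤ j → j < r → a j + b j = r) := by
  by_cases h1 : ∃ j, j < r ∧ a j < r - j
  · left
    obtain ⟨h2, h3⟩ := Nat.find_spec h1
    have h4 : ∀ i < Nat.find h1, ¬ (i < r ∧ a i < r - i) := fun i hi => Nat.find_min h1 hi
    generalize Nat.find h1 = j at h2 h3 h4
    have hj : 1 ≤ j := by
      rcases Nat.eq_zero_or_pos j with rfl | h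
      · omega
      · exact h
    have := h4 (j - 1) (by omega)
    exact ⟨j, hj, h2, h3, by omega⟩
  by_cases h1' : ∃ i, i < r ∧ b (r - i) < r - i
  · right; left
    -- the least `i` corresponds to the greatest `j = r - i` with `b j < j`
    obtain ⟨h2, h3⟩ := Nat.find_spec h1'
    have h4 : ∀ i < Nat.find h1', ¬ (i < r ∧ b (r - i) < r - i) :=
      fun i hi => Nat.find_min h1' hi
    generalize Nat.find h1' = i at h2 h3 h4
    have hi : 1 ≤ i := by
      rcases Nat.eq_zero_or_pos i with rfl | h
      · simp only [Nat.sub_zero] at h3; omega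
      · exact h
    have := h4 (i - 1) (by omega)
    have e : r - (i - 1) = r - i + 1 := by omega
    rw [e] at this
    exact ⟨r - i, by omega, by omega, h3, by omega⟩
  · right; right
    intro j hj hjr
    push Not at h1 h1'
    have h2 := h1 j hjr
    have h3 := h1' (r - j) (by omega)
    have e : r - (r - j) = j := by omega
    rw [e] at h3
    have := ha j hjr.le
    have := hb j hjr.le
    omega

/-- The operation at `u = v_{2j}` saving its left or right neighbor `w` is legal under the
inequalities of `exists_step`; `x` is the other neighbor of `u`. -/
lemma Inv.legal {r : ℕ} {a b : ℕ → ℕ} {st : State (Fin (2 * r - 1))} (h : Inv r a b st)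
    {j : ℕ} (u w x : Fin (2 * r - 1)) (hu : u.val + 1 = 2 * j) (hj : j < r)
    (hwx : (w.val + 1 = u.val ∧ x.val = u.val + 1 ∧ a j < r - j ∧ a j < a (j - 1)) ∨
      (w.val = u.val + 1 ∧ x.val + 1 = u.val ∧ b j < j ∧ b j < b (j + 1))) :
    u ∈ st.A ∧ LegalStep (SimpleGraph.pathGraph (2 * r - 1)) st u {w} := by
  have haj := h.a_le j hj.le
  have hbj := h.b_le j hj.le
  have huA : u ∈ st.A := (h.mem_even u j hu).2 (by omega)
  have hTu := h.tgt_even u j hu huA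
  have hSu := h.shd_even u j hu huA
  have e1 : j - 1 + 1 = j := by omega
  have ha1 := h.a_le (j - 1) (by omega)
  have hb1 := h.b_le (j + 1) (by omega)
  refine ⟨huA, huA, ?_, ?_, ?_⟩
  · intro y hy
    rw [Finset.mem_singleton] at hy
    subst hy
    rw [SimpleGraph.pathGraph_adj]
    rcases hwx with hwx | hwx
    · exact ⟨h.mem_odd y (j - 1) (by omega), by omega⟩
    · exact ⟨h.mem_odd y j (by omega), by omega⟩
  · rw [Finset.sum_singleton]
    rcases hwx with hwx | hwx
    · have h1 := h.tgt_odd w (j - 1) (by omega)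
      have h2 := h.shd_odd w (j - 1) (by omega)
      rw [e1] at h2
      omega
    · have h1 := h.tgt_odd w j (by omega)
      have h2 := h.shd_odd w j (by omega)
      omega
  · intro v _ hadj hvw
    rw [SimpleGraph.pathGraph_adj] at hadj
    have hne : v.val ≠ w.val := fun hv => hvw (Finset.mem_singleton.2 (Fin.ext hv))
    rcases hwx with hwx | hwx
    · have h2 := h.shd_odd v j (by omega)
      omega
    · have h2 := h.shd_odd v (j - 1) (by omega)
      rw [e1] at h2
      omega

/-- Effect of one operation at `u = v_{2j}` that saves `w` and shades `x = v_{2k+1}`: the count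
pairs `a i + b i` and `a i + b (i + 1)` increase by one at `i = j` and at `i = k` respectively. -/
lemma Inv.next {r : ℕ} {a b a' b' : ℕ → ℕ} {st : State (Fin (2 * r - 1))} (h : Inv r a b st)
    {j k : ℕ} (u w x : Fin (2 * r - 1)) (hu : u.val + 1 = 2 * j) (huA : u ∈ st.A)
    (hwx : (w.val + 1 = u.val ∧ x.val = u.val + 1) ∨ (w.val = u.val + 1 ∧ x.val + 1 = u.val))
    (hx : x.val = 2 * k) (hleg : LegalStep (SimpleGraph.pathGraph (2 * r - 1)) st u {w})
    (ha0 : a' 0 = r) (hbr : b' r = r) (ha : ∀ i, i ≤ r → a' i ≤ r - i)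
    (hb : ∀ i, i ≤ r → b' i ≤ i)
    (hT : ∀ i, a' i + b' i = a i + b i + if i = j then 1 else 0)
    (hS : ∀ i, i < r → a' i + b' (i + 1) = a i + b (i + 1) + if i = k then 1 else 0) :
    Inv r a' b' (applyStep (SimpleGraph.pathGraph (2 * r - 1)) st u {w}) := by
  have hTu := h.tgt_even u j hu huA
  have hmu := (h.mem_even u j hu).1 huA
  have hxA := h.mem_odd x k hx
  have hSx : 1 ≤ st.S x := by
    refine hleg.2.2.2 x hxA ?_ ?_
    · rw [SimpleGraph.pathGraph_adj]; omega
    · rw [Finset.mem_singleton, Fin.ext_iff]; omega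
  have hshade : ∀ v : Fin (2 * r - 1),
      ((SimpleGraph.pathGraph (2 * r - 1)).Adj u v ∧ v ∈ st.A ∧ v ∉ ({w} : Finset _)) ↔
        v = x := by
    intro v
    rw [SimpleGraph.pathGraph_adj, Finset.mem_singleton]
    constructor
    · rintro ⟨h1, -, h3⟩
      rw [Fin.ext_iff] at h3 ⊢
      omega
    · rintro rfl
      refine ⟨by omega, hxA, ?_⟩
      rw [Fin.ext_iff]
      omega
  have hA' : ∀ v, v ∈ (applyStep (SimpleGraph.pathGraph (2 * r - 1)) st u {w}).A ↔
      v ∈ st.A ∧ (v = u → st.T u ≠ 1) := by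
    intro v
    simp only [applyStep]
    split_ifs with h1
    · simp [h1, and_comm]
    · simp [h1]
  have hS' : ∀ v, (applyStep (SimpleGraph.pathGraph (2 * r - 1)) st u {w}).S v =
      if v = x then st.S v - 1 else st.S v := by
    intro v
    simp only [applyStep, hshade]
  have hT' : ∀ v, (applyStep (SimpleGraph.pathGraph (2 * r - 1)) st u {w}).T v =
      if v = u ∧ 1 < st.T u then st.T u - 1 else st.T v := by
    intro v
    simp only [applyStep]
    congr
  have hvu : ∀ v : Fin (2 * r - 1), ∀ i, v.val + 1 = 2 * i → (v = u ↔ i = j) := by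
    intro v i hv
    rw [Fin.ext_iff]
    omega
  refine ⟨ha0, hbr, ha, hb, ?_, ?_, ?_, ?_, ?_, ?_⟩
  · intro v i hv
    rw [hA', h.mem_even v i hv, hT, hvu v i hv]
    by_cases hij : i = j
    · subst hij
      simp only [if_true, forall_true_left]
      omega
    · simp [hij]
  · intro v i hv hvA
    rw [hA'] at hvA
    have h1 := h.tgt_even v i hv hvA.1
    have h2 := hT i
    rw [hT']
    by_cases hij : i = j
    · have hvu' := (hvu v i hv).2 hij
      have h3 := hvA.2 hvu'
      subst hij
      subst hvu'
      have h4 : 1 < st.T v := by omega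
      simp only [h4, and_self, if_true] at h2 ⊢
      omega
    · have hvu' : v ≠ u := fun hh => hij ((hvu v i hv).1 hh)
      simp only [hvu', hij, false_and, if_false] at h2 ⊢
      omega
  · intro v i hv hvA
    rw [hA'] at hvA
    have hne : v ≠ x := by rw [Ne, Fin.ext_iff]; omega
    rw [hS', if_neg hne]
    exact h.shd_even v i hv hvA.1
  · intro v i hv
    rw [hA']
    refine ⟨h.mem_odd v i hv, fun hh => ?_⟩
    rw [Fin.ext_iff] at hh
    omega
  · intro v i hv
    have hne : ¬ (v = u ∧ 1 < st.T u) := by rw [Fin.ext_iff]; omega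
    rw [hT', if_neg hne]
    exact h.tgt_odd v i hv
  · intro v i hv
    have h1 := h.shd_odd v i hv
    have h2 := hS i (by have := v.isLt; omega)
    rw [hS']
    by_cases hik : i = k
    · have hvx : v = x := by rw [Fin.ext_iff]; omega
      subst hvx
      simp only [hik, if_true] at h1 h2 ⊢
      omega
    · have hvx : v ≠ x := by rw [Ne, Fin.ext_iff]; omega
      simp only [hvx, hik, if_false] at h2 ⊢
      omega

lemma good_of_inv {r : ℕ} {a b : ℕ → ℕ} {st : State (Fin (2 * r - 1))} (hr : 1 ≤ r)
    (h : Inv r a b st) : Good (SimpleGraph.pathGraph (2 * r - 1)) st := by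
  induction hn : ∑ v ∈ st.A, st.T v using Nat.strong_induction_on generalizing st a b with
  | _ n ih =>
    subst hn
    have hT : ∀ v ∈ st.A, 1 ≤ st.T v := by
      intro v hv
      rcases Nat.even_or_odd' v.val with ⟨k, hk | hk⟩
      · rw [h.tgt_odd v k hk]; exact hr
      · have h1 := h.tgt_even v (k + 1) (by omega) hv
        have h2 := (h.mem_even v (k + 1) (by omega)).1 hv
        omega
    rcases exists_step h.a_zero h.b_last h.a_le h.b_le with
      ⟨j, hj1, hj, h1, h2⟩ | ⟨j, hj1, hj, h1, h2⟩ | hfin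
    · let u : Fin (2 * r - 1) := ⟨2 * j - 1, by omega⟩
      let w : Fin (2 * r - 1) := ⟨2 * j - 2, by omega⟩
      let x : Fin (2 * r - 1) := ⟨2 * j, by omega⟩
      have hu : u.val + 1 = 2 * j := by simp only [u]; omega
      have hw : w.val + 1 = u.val := by simp only [u, w]; omega
      have hx : x.val = u.val + 1 := by simp only [u, x]; omega
      obtain ⟨huA, hleg⟩ := h.legal u w x hu hj (.inl ⟨hw, hx, h1, h2⟩)
      refine Good.step hleg (by simp)
        (ih _ (sum_target_applyStep_lt _ st u {w} huA (hT u huA))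
          (h.next (a' := Function.update a j (a j + 1)) (b' := b) (k := j) u w x hu huA
            (.inl ⟨hw, hx⟩) rfl hleg ?_ h.b_last ?_ h.b_le ?_ ?_) rfl)
      · rw [Function.update_of_ne (by omega)]; exact h.a_zero
      · intro i hi
        have := h.a_le i hi
        rw [Function.update_apply]
        split_ifs with hij
        · subst hij; omega
        · exact this
      · intro i
        rw [Function.update_apply]
        split_ifs with hij
        · subst hij; omega
        · rfl
      · intro i _
        rw [Function.update_apply]
        split_ifs with hij
        · subst hij; omega
        · rfl
    · let u : Fin (2 * r - 1) := ⟨2 * j - 1, by omega⟩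
      let w : Fin (2 * r - 1) := ⟨2 * j, by omega⟩
      let x : Fin (2 * r - 1) := ⟨2 * j - 2, by omega⟩
      have hu : u.val + 1 = 2 * j := by simp only [u]; omega
      have hw : w.val = u.val + 1 := by simp only [u, w]; omega
      have hx : x.val + 1 = u.val := by simp only [u, x]; omega
      obtain ⟨huA, hleg⟩ := h.legal u w x hu hj (.inr ⟨hw, hx, h1, h2⟩)
      refine Good.step hleg (by simp)
        (ih _ (sum_target_applyStep_lt _ st u {w} huA (hT u huA))
          (h.next (a' := a) (b' := Function.update b j (b j + 1)) (k := j - 1) u w x hu huA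
            (.inr ⟨hw, hx⟩) (by omega) hleg h.a_zero ?_ h.a_le ?_ ?_ ?_) rfl)
      · rw [Function.update_of_ne (by omega)]; exact h.b_last
      · intro i hi
        have := h.b_le i hi
        rw [Function.update_apply]
        split_ifs with hij
        · subst hij; omega
        · exact this
      · intro i
        rw [Function.update_apply]
        split_ifs with hij
        · subst hij; omega
        · rfl
      · intro i _
        rw [Function.update_apply]
        by_cases hij : i + 1 = j
        · subst hij; simp; omega
        · rw [if_neg hij, if_neg (by omega), add_zero]
    · -- only vertices with an even `Fin` index are left
      have hev : ∀ v ∈ st.A, ∃ k, v.val = 2 * k := by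
        intro v hv
        rcases Nat.even_or_odd' v.val with ⟨k, hk | hk⟩
        · exact ⟨k, hk⟩
        · have h1 := (h.mem_even v (k + 1) (by omega)).1 hv
          have h2 := hfin (k + 1) (by omega) (by have := v.isLt; omega)
          omega
      refine good_of_indep _ _ (fun x hx y hy hadj => ?_) hT
      obtain ⟨k, hk⟩ := hev x hx
      obtain ⟨l, hl⟩ := hev y hy
      rw [SimpleGraph.pathGraph_adj] at hadj
      omega

/-- For `r ∈ ℕ` (so `r ≥ 1`), let `G = P_{2r−1}` be the path whose vertices
in order are `v_1, …, v_{2r−1}`.  Let `S` be the shield of `G` with `S(v_1) = S(v_{2r−1}) = 1`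
and `S(v_i) = r+1` for `2 ≤ i ≤ 2r−2`, and let `T` be the target that is identically `r`.
Then `G` is `ST⁽⁴⁾`-`(S,T)`-degenerate. -/
theorem st4Deg_path_odd (r : ℕ) (hr : 1 ≤ r) :
    ST4Deg (SimpleGraph.pathGraph (2 * r - 1))
      (fun v => if v.val = 0 ∨ v.val = 2 * r - 2 then 1 else r + 1)
      (fun _ => r) := by
  change Good _ ⟨Finset.univ, _, _⟩
  -- for `r = 1` the two ends coincide and the conventions of `Inv` do not apply
  rcases hr.eq_or_lt with rfl | hr2
  · refine good_of_indep _ _ (fun x _ y _ hadj => ?_) (fun _ _ => le_rfl)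
    rw [SimpleGraph.pathGraph_adj] at hadj
    have := x.isLt
    have := y.isLt
    omega
  refine good_of_inv (a := fun j => if j = 0 then r else 0)
    (b := fun j => if j = r then r else 0) hr ?_
  constructor
  · simp
  · simp
  · intro j hj; split_ifs <;> omega
  · intro j hj; split_ifs <;> omega
  · intro v j hv
    have := v.isLt
    simp only [Finset.mem_univ, true_iff]
    split_ifs <;> omega
  · intro v j hv _
    have := v.isLt
    dsimp only
    split_ifs <;> omega
  · intro v j hv _
    have := v.isLt
    dsimp only
    split_ifs <;> omega
  · intro v j hv; exact Finset.mem_univ _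
  · intro v j hv; rfl
  · intro v j hv
    have := v.isLt
    dsimp only
    split_ifs <;> omega

end StrictDeg
end
end

section
/- Suppose G is a graph and X is an independent set of vertices in G such that X contains every vertex of G of degree at least 3, G − X is a linear forest (a disjoint union of paths, possibly empty), and the order of each component of G − X is at least 2r−1 for some r ∈ ℕ. Then G is ST^(4)-(r+1,r)-degenerate; consequently ST^(4)*(G) ≤ 2 + 1/r. -/
/-!
Every vertex outside `X` has degree at most `2`. Delete all of `X` first, performing `r` operations
without saving at each of its vertices. Afterwards an inner vertex of a path of `G - X` still has
shield `r + 1` and an end has shield at least `1` (an isolated vertex, which forces `r = 1`, has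
shield at least `0`). Each path is then cleared separately (`win_linear_forest`).

For a path `u₀ o₁ u₁ o₂ … o_k u_k` of odd order, `k ≥ r - 1`, put `b i = max 0 (i + r - k - 1)`, so
that `b 1 ≤ 1`, `b k = r - 1` and `b (i + 1) ≤ b i + 1`. Only the vertices `o_i` act. In a first
pass from left to right (`path_phase_one`), `o_i` acts `r - b i` times, saving `u_{i-1}` and shading
`u_i`. In a second pass from right to left (`path_phase_two`), `o_i` acts its remaining `b i` times,
saving `u_i`, which by then has shield `0`, and shading `u_{i-1}`. An inner `u_i` is thus shaded
`r - b i + b (i + 1) ≤ r + 1` times, the ends at most once. A path of even order is reduced to this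
case by deleting an end vertex (`win_path`).

Surplus shields are harmless: a vertex with a larger shield than planned is shaded instead of saved.
`Win.simulate` proves this together with the transfer from the model path on `ℕ` to a component of
`G - X`.
-/

open scoped Classical

noncomputable section

namespace StrictDeg

variable {V : Type}

/-! ### Winning states -/

/-- The states from which a complete restricted legal sequence exists, as an inductive
predicate. -/
inductive Win (G : SimpleGraph V) : State V → Prop
  | done (st : State V) (h : st.A = ∅) : Win G st
  | step (st : State V) (u : V) (W : Finset V) (hl : LegalStep G st u W) (hc : W.card ≤ 1)
      (h : Win G (applyStep G st u W)) : Win G st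

lemma Win.st4DegOn {G : SimpleGraph V} {st : State V} (h : Win G st) :
    ST4DegOn G st.A st.S st.T := by
  induction h with
  | done st h => exact ⟨[], trivial, by simp, h⟩
  | step st u W hl hc h ih =>
    obtain ⟨l, h1, h2, h3⟩ := ih
    refine ⟨(u, W) :: l, ⟨hl, h1⟩, ?_, h3⟩
    intro op hop
    rcases List.mem_cons.1 hop with rfl | hop
    · exact hc
    · exact h2 op hop

/-- Iterating one operation: `n` consecutive operations at `u`, all saving the same set `W`, lower
the target of `u` from `n + c` to `c`. The inequality on sums is the legality condition of the last
of them, the most demanding one. -/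
lemma win_repeat {G : SimpleGraph V} (u : V) (W : Finset V) (hW : W.card ≤ 1) (c : ℕ) :
    ∀ (n : ℕ) (st : State V), (c = 0 → 1 ≤ n) → u ∈ st.A → (∀ w ∈ W, w ∈ st.A ∧ G.Adj u w) →
      st.T u = n + c → (∑ w ∈ W, (st.S w + st.T w)) ≤ st.S u + c →
      (∀ v ∈ st.A, G.Adj u v → v ∉ W → n ≤ st.S v) →
      (∀ st' : State V, (st'.A = if c = 0 then st.A.erase u else st.A) →
        (∀ v ∈ st'.A, st'.S v = if G.Adj u v ∧ v ∉ W then st.S v - n else st.S v) →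
        (∀ v ∈ st'.A, st'.T v = if v = u then c else st.T v) → Win G st') →
      Win G st := by
  intro n
  induction n with
  | zero =>
    intro st hc hu _ hT _ _ hwin
    have hc0 : c ≠ 0 := fun h => by simpa using hc h
    refine hwin st (by simp [hc0]) (by simp) ?_
    intro v _
    split_ifs with h
    · subst h; omega
    · rfl
  | succ n ih =>
    intro st hc hu hWA hT hsum hS hwin
    have huW : u ∉ W := fun h => G.loopless.irrefl u (hWA u h).2
    refine Win.step st u W ⟨hu, hWA, by omega, fun v hv ha hw => by
      have := hS v hv ha hw; omega⟩ hW ?_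
    have hSu : ¬ G.Adj u u := G.loopless.irrefl u
    by_cases hlast : n = 0 ∧ c = 0
    · obtain ⟨rfl, rfl⟩ := hlast
      have hT1 : st.T u = 1 := by omega
      refine hwin _ (by simp [applyStep, hT1]) ?_ ?_
      · intro v hv
        have hv' : v ∈ st.A := by
          simp only [applyStep, hT1, if_true] at hv
          exact Finset.mem_of_mem_erase hv
        simp [applyStep, hv']
      · intro v hv
        simp only [applyStep, hT1, if_true, Finset.mem_erase] at hv
        simp [applyStep, hv.1]
    · have hT1 : st.T u ≠ 1 := by omega
      have hT2 : 1 < st.T u := by omega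
      have hA : (applyStep G st u W).A = st.A := by simp [applyStep, hT1]
      refine ih _ (by omega) (by rw [hA]; exact hu) (by rw [hA]; exact hWA) ?_ ?_ ?_ ?_
      · simp [applyStep, hT2]; omega
      · have h1 : ∑ w ∈ W, ((applyStep G st u W).S w + (applyStep G st u W).T w)
            = ∑ w ∈ W, (st.S w + st.T w) := by
          refine Finset.sum_congr rfl fun w hw => ?_
          have : w ≠ u := fun h => huW (h ▸ hw)
          simp [applyStep, hw, this]
        rw [h1]
        simpa [applyStep] using hsum
      · intro v hv ha hw
        rw [hA] at hv
        have := hS v hv ha hw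
        simp [applyStep, hv, ha, hw]; omega
      · intro st' hA' hS' hT'
        rw [hA] at hA'
        refine hwin st' hA' ?_ ?_
        · intro v hv
          have hv' : v ∈ st.A := by
            rw [hA'] at hv
            split_ifs at hv
            · exact Finset.mem_of_mem_erase hv
            · exact hv
          rw [hS' v hv]
          by_cases h : G.Adj u v ∧ v ∉ W
          · simp [applyStep, h, hv']; omega
          · simp only [applyStep, h, if_false]
            rw [if_neg (fun h' => h ⟨h'.1, h'.2.2⟩)]
        · intro v hv
          rw [hT' v hv]
          by_cases h : v = u
          · simp [h]
          · simp [h, applyStep]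

/-- Deleting `u` outright, shading all of its neighbours `T u` times. -/
lemma win_delete {G : SimpleGraph V} (st : State V) (u : V) (hu : u ∈ st.A) (hT : 1 ≤ st.T u)
    (hS : ∀ v ∈ st.A, G.Adj u v → st.T u ≤ st.S v)
    (hwin : ∀ st' : State V, st'.A = st.A.erase u →
      (∀ v ∈ st'.A, st'.S v = if G.Adj u v then st.S v - st.T u else st.S v) →
      (∀ v ∈ st'.A, st'.T v = st.T v) → Win G st') : Win G st := by
  refine win_repeat u ∅ (by simp) 0 (st.T u) st (by simp [hT]) hu (by simp) (by simp) (by simp)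
    (fun v hv ha _ => hS v hv ha) ?_
  intro st' hA hS' hT'
  rw [if_pos rfl] at hA
  refine hwin st' hA (fun v hv => by simpa using hS' v hv) (fun v hv => ?_)
  rw [hT' v hv, if_neg]
  rw [hA] at hv
  exact (Finset.mem_erase.1 hv).1

/-- `Finset.mem_erase` for the classical decidability instance used by `applyStep`; needed at
types such as `ℕ` that carry an instance of their own. -/
lemma mem_erase_iff (a b : V) (s : Finset V) : a ∈ s.erase b ↔ a ≠ b ∧ a ∈ s :=
  Finset.mem_erase

lemma win_of_indep {G : SimpleGraph V} : ∀ (n : ℕ) (st : State V), st.A.card = n →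
    (∀ u ∈ st.A, ∀ v ∈ st.A, ¬ G.Adj u v) → (∀ u ∈ st.A, 1 ≤ st.T u) → Win G st := by
  intro n
  induction n with
  | zero => exact fun st h _ _ => Win.done st (Finset.card_eq_zero.1 h)
  | succ n ih =>
    intro st hcard hind hT
    obtain ⟨u, hu⟩ : st.A.Nonempty := Finset.card_pos.1 (by omega)
    refine win_delete st u hu (hT u hu) (fun v hv ha => absurd ha (hind u hu v hv)) ?_
    intro st' hA _ hT'
    have hsub : ∀ v ∈ st'.A, v ∈ st.A := fun v hv => by
      rw [hA] at hv; exact Finset.mem_of_mem_erase hv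
    refine ih st' ?_ (fun a ha b hb => hind a (hsub a ha) b (hsub b hb))
      (fun a ha => by rw [hT' a ha]; exact hT a (hsub a ha))
    rw [hA, Finset.card_erase_of_mem hu]; omega

/-- Simulation. A winning strategy for `G₁` can be played on an isolated copy of its vertices inside
`G₂`, even with larger shields there: a vertex whose shield exceeds the one being simulated is
simply not saved. What remains afterwards is the untouched rest `B`. -/
lemma Win.simulate {V₁ V₂ : Type} {G₁ : SimpleGraph V₁} {G₂ : SimpleGraph V₂} (f : V₁ → V₂)
    (B : Finset V₂) {st₁ : State V₁} (h : Win G₁ st₁) :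
    ∀ st₂ : State V₂, Set.InjOn f st₁.A →
      (∀ a ∈ st₁.A, ∀ b ∈ st₁.A, G₁.Adj a b ↔ G₂.Adj (f a) (f b)) →
      st₂.A = st₁.A.image f ∪ B → (∀ a ∈ st₁.A, f a ∉ B) →
      (∀ a ∈ st₁.A, ∀ b ∈ B, ¬ G₂.Adj (f a) b) →
      (∀ a ∈ st₁.A, st₁.S a ≤ st₂.S (f a)) → (∀ a ∈ st₁.A, st₁.T a = st₂.T (f a)) →
      (∀ st' : State V₂, st'.A = B → (∀ b ∈ B, st'.S b = st₂.S b) →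
        (∀ b ∈ B, st'.T b = st₂.T b) → Win G₂ st') → Win G₂ st₂ := by
  induction h with
  | done st h =>
    intro st₂ _ _ hA _ _ _ _ hwin
    exact hwin st₂ (by simpa [h] using hA) (fun _ _ => rfl) (fun _ _ => rfl)
  | step st u W hl hc h ih =>
    intro st₂ hinj hadj hA hdis hnadj hS hT hwin
    obtain ⟨hu, hWA, hsum, hpos⟩ := hl
    have hWsub : ∀ w ∈ W, w ∈ st.A := fun w hw => (hWA w hw).1
    set W' := W.filter (fun w => st.S w = st₂.S (f w)) with hW'
    have hW'sub : ∀ w ∈ W', w ∈ st.A := fun w hw => hWsub w (Finset.mem_filter.1 hw).1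
    have hmem : ∀ a ∈ st.A, (f a ∈ W'.image f ↔ a ∈ W') := by
      intro a ha
      constructor
      · intro h
        obtain ⟨w, hw, hwe⟩ := Finset.mem_image.1 h
        rwa [← hinj (hW'sub w hw) ha hwe]
      · exact Finset.mem_image_of_mem f
    have hAmem : ∀ a ∈ st.A, f a ∈ st₂.A := fun a ha => by
      rw [hA]; exact Finset.mem_union_left _ (Finset.mem_image_of_mem f ha)
    have hTu := hT u hu
    have hsub : ∀ a ∈ (applyStep G₁ st u W).A, a ∈ st.A := by
      intro a ha
      simp only [applyStep] at ha
      split_ifs at ha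
      · exact Finset.mem_of_mem_erase ha
      · exact ha
    refine Win.step st₂ (f u) (W'.image f) ⟨hAmem u hu, ?_, ?_, ?_⟩
      ((Finset.card_image_le.trans (Finset.card_filter_le _ _)).trans hc) ?_
    · intro w hw
      obtain ⟨a, ha, rfl⟩ := Finset.mem_image.1 hw
      have haA := hW'sub a ha
      exact ⟨hAmem a haA, (hadj u hu a haA).1 (hWA a (Finset.mem_filter.1 ha).1).2⟩
    · rw [Finset.sum_image (fun a ha b hb hab => hinj (hW'sub a ha) (hW'sub b hb) hab)]
      have h1 : ∑ w ∈ W', (st₂.S (f w) + st₂.T (f w)) = ∑ w ∈ W', (st.S w + st.T w) := by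
        refine Finset.sum_congr rfl fun w hw => ?_
        rw [hT w (hW'sub w hw), (Finset.mem_filter.1 hw).2]
      have h2 : ∑ w ∈ W', (st.S w + st.T w) ≤ ∑ w ∈ W, (st.S w + st.T w) :=
        Finset.sum_le_sum_of_subset (Finset.filter_subset _ _)
      have := hS u hu
      omega
    · intro v hv ha hvW
      rw [hA] at hv
      rcases Finset.mem_union.1 hv with hv | hv
      · obtain ⟨a, haA, rfl⟩ := Finset.mem_image.1 hv
        have h1 := hS a haA
        by_cases haW : a ∈ W
        · have : st.S a ≠ st₂.S (f a) := fun he =>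
            hvW (Finset.mem_image_of_mem f (Finset.mem_filter.2 ⟨haW, he⟩))
          omega
        · have := hpos a haA ((hadj u hu a haA).2 ha) haW
          omega
      · exact absurd ha (hnadj u hu v hv)
    · refine ih _ (hinj.mono (fun a ha => hsub a ha))
        (fun a ha b hb => hadj a (hsub a ha) b (hsub b hb)) ?_ (fun a ha => hdis a (hsub a ha))
        (fun a ha => hnadj a (hsub a ha)) ?_ ?_ ?_
      · simp only [applyStep, ← hTu]
        split_ifs with h1
        · ext x
          rw [hA]
          simp only [Finset.mem_erase, Finset.mem_union, Finset.mem_image]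
          constructor
          · rintro ⟨hx, ⟨a, ha, rfl⟩ | hx'⟩
            · exact Or.inl ⟨a, ⟨fun h => hx (h ▸ rfl), ha⟩, rfl⟩
            · exact Or.inr hx'
          · rintro (⟨a, ⟨hau, ha⟩, rfl⟩ | hx')
            · exact ⟨fun h => hau (hinj ha hu h), Or.inl ⟨a, ha, rfl⟩⟩
            · exact ⟨fun h => hdis u hu (h ▸ hx'), Or.inr hx'⟩
        · exact hA
      · intro a ha
        have haA := hsub a ha
        have h1 := hS a haA
        have h2 := hadj u hu a haA
        have h3 := hmem a haA
        have h5 : a ∈ W' ↔ a ∈ W ∧ st.S a = st₂.S (f a) := Finset.mem_filter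
        simp only [applyStep]
        split_ifs with c1 c2 c2
        · omega
        · omega
        · have haW : a ∈ W := by
            by_contra haW
            exact c1 ⟨h2.2 c2.1, haA, haW⟩
          have : st.S a ≠ st₂.S (f a) := fun he => c2.2.2 (h3.2 (h5.2 ⟨haW, he⟩))
          omega
        · omega
      · intro a ha
        have haA := hsub a ha
        have h1 : f a = f u ↔ a = u := ⟨fun h => hinj haA hu h, fun h => h ▸ rfl⟩
        simp only [applyStep, ← hTu, h1, hT a haA]
      · intro st' hA' hS' hT'
        refine hwin st' hA' (fun b hb => ?_) (fun b hb => ?_)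
        · rw [hS' b hb]
          simp [applyStep, hnadj u hu b hb]
        · rw [hT' b hb]
          have : b ≠ f u := fun h => hdis u hu (h ▸ hb)
          simp [applyStep, this]

/-! ### Paths -/

/-- The one-way infinite path on `ℕ`; its initial segments are the finite paths. -/
def ray : SimpleGraph ℕ where
  Adj i j := i + 1 = j ∨ j + 1 = i
  symm := ⟨fun _ _ h => h.symm⟩
  loopless := ⟨fun i h => by omega⟩

lemma ray_adj (i j : ℕ) : ray.Adj i j ↔ (i + 1 = j ∨ j + 1 = i) := Iff.rfl

/-- Second pass over a path `0, …, 2k`, from right to left. With `b i = i + r - (k + 1)` (truncated),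
the odd vertex `2i - 1` has target `b i` left (and is absent if `b i = 0`), the even vertex `2i` has
shield `1 + b i`, and everything to the right of `2j` is finished. Vertex `2j - 1` spends its
remaining `b j` operations saving `2j`, whose shield is `0`, and shading `2j - 2`, whose shield then
becomes `1 + b (j - 1) - b j = 0`. Once all odd vertices are gone the even ones are isolated. -/
lemma path_phase_two (r k : ℕ) (hr : 1 ≤ r) (hk : r ≤ k + 1) : ∀ (j : ℕ), j ≤ k →
    ∀ st : State ℕ,
    (∀ n, n ∈ st.A ↔ n ≤ 2 * k ∧ (n % 2 = 0 ∨ (n / 2 < j ∧ k < n / 2 + r))) →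
    (∀ n ∈ st.A, n % 2 = 1 → st.S n = r + 1 ∧ st.T n = n / 2 + 1 + r - (k + 1)) →
    (∀ n ∈ st.A, n % 2 = 0 → st.T n = r) →
    (∀ n ∈ st.A, n % 2 = 0 → n / 2 < j → st.S n = 1 + (n / 2 + r - (k + 1))) →
    st.S (2 * j) = 0 → Win ray st := by
  intro j
  induction j with
  | zero =>
    intro _ st hA _ hT _ _
    refine win_of_indep _ st rfl ?_ ?_
    · intro u hu v hv ha
      rw [hA] at hu hv
      rw [ray_adj] at ha
      omega
    · intro u hu
      rw [hT u hu (by rw [hA] at hu; omega)]; exact hr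
  | succ j ih =>
    intro hj st hA hO hT hS h0
    by_cases hb : k < j + r
    · have hu : 2 * j + 1 ∈ st.A := by rw [hA]; omega
      have hw : 2 * j + 2 ∈ st.A := by rw [hA]; omega
      have h1 := hO _ hu (by omega)
      have h2 := hT _ hw (by omega)
      refine win_repeat (2 * j + 1) {2 * j + 2} (by simp) 0 (j + 1 + r - (k + 1)) st
        (by omega) hu ?_ ?_ ?_ ?_ ?_
      · intro w hw'
        rw [Finset.mem_singleton] at hw'
        subst hw'
        exact ⟨hw, Or.inl (by omega)⟩
      · rw [h1.2]; omega
      · rw [Finset.sum_singleton, h2, h1.1]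
        have : st.S (2 * j + 2) = 0 := h0
        omega
      · intro v hv ha hvw
        rw [Finset.mem_singleton] at hvw
        rw [ray_adj] at ha
        have := hS v hv (by omega) (by omega)
        omega
      · intro st' hA' hS' hT'
        rw [if_pos rfl] at hA'
        have hm : ∀ n, n ∈ st'.A ↔ n ≠ 2 * j + 1 ∧ n ∈ st.A := by
          intro n; rw [hA', mem_erase_iff]
        refine ih (by omega) st' ?_ ?_ ?_ ?_ ?_
        · intro n; rw [hm, hA]; omega
        · intro n hn ho
          have hn' := (hm n).1 hn
          have := hO n hn'.2 ho
          rw [hS' n hn, hT' n hn, if_neg hn'.1, if_neg]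
          · exact this
          · rw [ray_adj]; omega
        · intro n hn he
          have hn' := (hm n).1 hn
          rw [hT' n hn, if_neg hn'.1]
          exact hT n hn'.2 he
        · intro n hn he hlt
          have hn' := (hm n).1 hn
          rw [hS' n hn, if_neg]
          · exact hS n hn'.2 he (by omega)
          · rw [ray_adj]; omega
        · have hn : 2 * j ∈ st.A := by rw [hA]; omega
          have hn' : 2 * j ∈ st'.A := by rw [hm]; exact ⟨by omega, hn⟩
          have := hS _ hn (by omega) (by omega)
          rw [hS' _ hn', if_pos]
          · omega
          · rw [ray_adj, Finset.mem_singleton]; omega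
    · refine win_of_indep _ st rfl ?_ ?_
      · intro u hu v hv ha
        rw [hA] at hu hv
        rw [ray_adj] at ha
        omega
      · intro u hu
        rw [hT u hu (by rw [hA] at hu; omega)]; exact hr

/-- First pass over a path `0, …, 2k`, from left to right, with `b i = i + r - (k + 1)` (truncated).
The odd vertices `2i - 1` with `i ≤ j` have been lowered to target `b i`. The next one, `2j + 1`,
performs `r - b (j + 1) = min r (k - j)` operations, saving `2j` and shading `2j + 2`; these are
legal since `2j` has shield only `1 + b j`. The right end `2k`, of shield `1`, is shaded
exactly once. -/
lemma path_phase_one (r k : ℕ) (hr : 1 ≤ r) (hk : r ≤ k + 1) : ∀ (d j : ℕ), j + d = k →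
    ∀ st : State ℕ,
    (∀ n, n ∈ st.A ↔ n ≤ 2 * k ∧ (n % 2 = 0 ∨ j ≤ n / 2 ∨ k < n / 2 + r)) →
    (∀ n ∈ st.A, n % 2 = 1 → st.S n = r + 1 ∧
      st.T n = if n / 2 < j then n / 2 + 1 + r - (k + 1) else r) →
    (∀ n ∈ st.A, n % 2 = 0 → st.T n = r) →
    (∀ n ∈ st.A, n % 2 = 0 → st.S n = if n = 2 * k then (if j < k then 1 else 0) else
      if n / 2 ≤ j then 1 + (n / 2 + r - (k + 1)) else r + 1) → Win ray st := by
  intro d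
  induction d with
  | zero =>
    intro j hj st hA hO hT hS
    obtain rfl : j = k := by omega
    refine path_phase_two r j hr hk j le_rfl st ?_ ?_ hT ?_ ?_
    · intro n; rw [hA]; omega
    · intro n hn ho
      have := hO n hn ho
      rw [hA] at hn
      rwa [if_pos (by omega)] at this
    · intro n hn he hlt
      rw [hS n hn he, if_neg (by omega), if_pos (by omega)]
    · rw [hS (2 * j) (by rw [hA]; omega) (by omega)]
      simp
  | succ d ih =>
    intro j hj st hA hO hT hS
    have hu : 2 * j + 1 ∈ st.A := by rw [hA]; omega
    have hw : 2 * j ∈ st.A := by rw [hA]; omega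
    have h1 := hO _ hu (by omega)
    rw [if_neg (by omega)] at h1
    have h2 := hT _ hw (by omega)
    have h3 := hS _ hw (by omega)
    rw [if_neg (by omega), if_pos (by omega)] at h3
    refine win_repeat (2 * j + 1) {2 * j} (by simp) (j + 1 + r - (k + 1)) (min r (k - j)) st
      (by omega) hu ?_ ?_ ?_ ?_ ?_
    · intro w hw'
      rw [Finset.mem_singleton] at hw'
      subst hw'
      exact ⟨hw, Or.inr (by omega)⟩
    · rw [h1.2]; omega
    · rw [Finset.sum_singleton, h2, h1.1, h3]
      omega
    · intro v hv ha hvw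
      rw [Finset.mem_singleton] at hvw
      rw [ray_adj] at ha
      have := hS v hv (by omega)
      split_ifs at this <;> omega
    · intro st' hA' hS' hT'
      have hm : ∀ n, n ∈ st'.A ↔ n ∈ st.A ∧ (n = 2 * j + 1 → k < j + r) := by
        intro n; rw [hA']
        split_ifs
        · rw [mem_erase_iff]
          constructor
          · exact fun h => ⟨h.2, fun h' => absurd h' h.1⟩
          · exact fun h => ⟨fun h' => by have := h.2 h'; omega, h.1⟩
        · constructor
          · exact fun h => ⟨h, by omega⟩
          · exact fun h => h.1
      refine ih (j + 1) (by omega) st' ?_ ?_ ?_ ?_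
      · intro n; rw [hm, hA]; omega
      · intro n hn ho
        have hn' := (hm n).1 hn
        have := hO n hn'.1 ho
        rw [hS' n hn, hT' n hn, if_neg (by rw [ray_adj]; omega)]
        refine ⟨this.1, ?_⟩
        rw [this.2]
        split_ifs <;> omega
      · intro n hn he
        have hn' := (hm n).1 hn
        rw [hT' n hn, if_neg (by omega)]
        exact hT n hn'.1 he
      · intro n hn he
        have hn' := (hm n).1 hn
        have := hS n hn'.1 he
        have hnk := ((hA n).1 hn'.1).1
        rw [hS' n hn]
        simp only [ray_adj, Finset.mem_singleton]
        split_ifs at this ⊢ <;> omega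

/-- A path of odd order `2k + 1 ≥ 2r - 1` whose ends have shield `1`. -/
lemma win_odd_path (r k : ℕ) (hr : 1 ≤ r) (hk : r ≤ k + 1) (st : State ℕ)
    (hA : st.A = Finset.range (2 * k + 1)) (hT : ∀ n ∈ st.A, st.T n = r)
    (hS : ∀ n ∈ st.A, st.S n = if k = 0 then 0 else if n = 0 ∨ n = 2 * k then 1 else r + 1) :
    Win ray st := by
  have hm : ∀ n, n ∈ st.A ↔ n ≤ 2 * k := by intro n; rw [hA, Finset.mem_range]; omega
  refine path_phase_one r k hr hk k 0 (by omega) st ?_ ?_ (fun n hn _ => hT n hn) ?_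
  · intro n; rw [hm]; omega
  · intro n hn ho
    have := hS n hn
    rw [hm] at hn
    have h2 := hT n ((hm n).2 hn)
    split_ifs at this ⊢ <;> omega
  · intro n hn he
    have := hS n hn
    rw [hm] at hn
    split_ifs at this ⊢ <;> omega

/-- A path of order `m ≥ 2r - 1` whose ends have shield `1`. If `m` is even, deleting an end turns
the next vertex into an end with shield `1`. -/
lemma win_path (r m : ℕ) (hr : 1 ≤ r) (hm : 2 * r - 1 ≤ m) (st : State ℕ)
    (hA : st.A = Finset.range m) (hT : ∀ n ∈ st.A, st.T n = r)
    (hS : ∀ n ∈ st.A, st.S n = if m = 1 then 0 else if n = 0 ∨ n + 1 = m then 1 else r + 1) :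
    Win ray st := by
  have hmem : ∀ n, n ∈ st.A ↔ n < m := by intro n; rw [hA, Finset.mem_range]
  rcases Nat.even_or_odd' m with ⟨k, rfl | rfl⟩
  · have hu : 2 * k - 1 ∈ st.A := by rw [hmem]; omega
    have hTu := hT _ hu
    refine win_delete st (2 * k - 1) hu (by omega) ?_ ?_
    · intro v hv ha
      rw [ray_adj] at ha
      have := hS v hv
      rw [hmem] at hv
      rw [hTu]
      split_ifs at this <;> omega
    · intro st' hA' hS' hT'
      have hmem' : ∀ n, n ∈ st'.A ↔ n < 2 * k - 1 := by
        intro n; rw [hA', mem_erase_iff, hmem]; omega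
      have hsub : ∀ n ∈ st'.A, n ∈ st.A := fun n hn => by
        rw [hmem'] at hn; rw [hmem]; omega
      refine win_odd_path r (k - 1) hr (by omega) st' ?_ ?_ ?_
      · ext n; rw [hmem', Finset.mem_range]; omega
      · intro n hn; rw [hT' n hn]; exact hT n (hsub n hn)
      · intro n hn
        have h1 := hS n (hsub n hn)
        rw [hS' n hn, hTu]
        rw [hmem'] at hn
        simp only [ray_adj]
        split_ifs at h1 ⊢ <;> omega
  · refine win_odd_path r k hr (by omega) st hA hT ?_
    intro n hn
    rw [hS n hn]
    split_ifs <;> omega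

/-! ### Deleting `X` and clearing the linear forest -/

/-- Deleting an independent set `Y` first: each vertex outside loses `r` shields per neighbour
in `Y`. -/
lemma win_delete_indep {G : SimpleGraph V} (B : Finset V) (r : ℕ) (hr : 1 ≤ r) (e : V → ℕ)
    (Y : Finset V) : ∀ st : State V, st.A = Y ∪ B → Disjoint Y B →
      (∀ x ∈ Y, ∀ y ∈ Y, ¬ G.Adj x y) → (∀ v ∈ st.A, st.T v = r) →
      (∀ v ∈ B, e v + r * (Y.filter (G.Adj v)).card ≤ st.S v) →
      (∀ st' : State V, st'.A = B → (∀ v ∈ B, st'.T v = r) → (∀ v ∈ B, e v ≤ st'.S v) →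
        Win G st') → Win G st := by
  induction Y using Finset.induction_on with
  | empty =>
    intro st hA _ _ hT hS hwin
    rw [Finset.empty_union] at hA
    exact hwin st hA (fun v hv => hT v (hA ▸ hv)) (fun v hv => by simpa using hS v hv)
  | insert x Y hx ih =>
    intro st hA hdis hind hT hS hwin
    have hxB : x ∉ B := Finset.disjoint_left.1 hdis (Finset.mem_insert_self x Y)
    have hxA : x ∈ st.A := by rw [hA]; simp
    have hcard : ∀ v, G.Adj x v →
        ((insert x Y).filter (G.Adj v)).card = (Y.filter (G.Adj v)).card + 1 := by
      intro v hv
      rw [Finset.filter_insert, if_pos hv.symm, Finset.card_insert_of_notMem]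
      simp [hx]
    refine win_delete st x hxA (by rw [hT x hxA]; exact hr) ?_ ?_
    · intro v hv ha
      rw [hA] at hv
      rcases Finset.mem_union.1 hv with hv | hv
      · exact absurd ha (hind x (by simp) v hv)
      · have := hS v hv
        rw [hcard v ha, mul_add] at this
        rw [hT x hxA]; omega
    · intro st' hA' hS' hT'
      have hA'' : st'.A = Y ∪ B := by
        rw [hA', hA]
        ext v
        simp only [Finset.mem_erase, Finset.mem_union, Finset.mem_insert]
        constructor
        · tauto
        · rintro (h | h)
          · exact ⟨fun h' => hx (h' ▸ h), Or.inl (Or.inr h)⟩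
          · exact ⟨fun h' => hxB (h' ▸ h), Or.inr h⟩
      refine ih st' hA'' (hdis.mono_left (Finset.subset_insert x Y))
        (fun a ha b hb => hind a (by simp [ha]) b (by simp [hb])) ?_ ?_ hwin
      · intro v hv
        rw [hT' v hv]
        rw [hA'] at hv
        exact hT v (Finset.mem_of_mem_erase hv)
      · intro v hv
        have h1 := hS v hv
        rw [hS' v (by rw [hA'']; simp [hv]), hT x hxA]
        split_ifs with ha
        · rw [hcard v ha, mul_add] at h1; omega
        · rwa [Finset.filter_insert, if_neg (fun h => ha h.symm)] at h1

/-- A nonempty union `A` of components of a finite acyclic graph of maximum degree at most `2`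
contains a component that is a path `f 0, …, f (m - 1)`: a longest path in `A` is one. -/
lemma exists_path_component {W : Type} [Finite W] (H : SimpleGraph W) (hac : H.IsAcyclic)
    (hdeg : ∀ v a b c : W, a ≠ b → a ≠ c → b ≠ c → H.Adj v a → H.Adj v b → ¬ H.Adj v c)
    (A : Set W) (hne : A.Nonempty) (hcl : ∀ a ∈ A, ∀ b, H.Adj a b → b ∈ A) :
    ∃ (m : ℕ) (f : ℕ → W), 1 ≤ m ∧ (∀ i < m, f i ∈ A) ∧
      (∀ i < m, ∀ j < m, f i = f j → i = j) ∧
      (∀ i < m, ∀ j < m, H.Adj (f i) (f j) ↔ (i + 1 = j ∨ j + 1 = i)) ∧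
      (∀ i < m, ∀ w, H.Adj (f i) w → ∃ j < m, w = f j) := by
  have := Fintype.ofFinite W
  obtain ⟨n, ⟨u, huA, w, p, hp, rfl⟩, hmax⟩ : ∃ n, (∃ u ∈ A, ∃ w, ∃ p : H.Walk u w,
      p.IsPath ∧ p.length = n) ∧ ∀ n', (∃ u ∈ A, ∃ w, ∃ p : H.Walk u w,
      p.IsPath ∧ p.length = n') → n' ≤ n := by
    obtain ⟨a, ha⟩ := hne
    have hb : ∀ n', (∃ u ∈ A, ∃ w, ∃ p : H.Walk u w, p.IsPath ∧ p.length = n') →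
        n' ≤ Fintype.card W := by
      rintro _ ⟨u, _, w, p, hp, rfl⟩
      exact hp.length_lt.le
    have h0 : ∃ u ∈ A, ∃ w, ∃ p : H.Walk u w, p.IsPath ∧ p.length = 0 :=
      ⟨a, ha, a, SimpleGraph.Walk.nil, SimpleGraph.Walk.IsPath.nil, rfl⟩
    let P : ℕ → Prop := fun n' => ∃ u ∈ A, ∃ w, ∃ p : H.Walk u w, p.IsPath ∧ p.length = n'
    exact ⟨Nat.findGreatest P (Fintype.card W), Nat.findGreatest_spec (P := P) (Nat.zero_le _) h0,
      fun n' hn' => Nat.le_findGreatest (hb n' hn') hn'⟩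
  have hinj : ∀ i < p.length + 1, ∀ j < p.length + 1, p.getVert i = p.getVert j → i = j :=
    fun i hi j hj h => hp.getVert_injOn (by simp; omega) (by simp; omega) h
  have hsucc : ∀ i < p.length, H.Adj (p.getVert i) (p.getVert (i + 1)) :=
    fun i hi => p.adj_getVert_succ hi
  have hmemA : ∀ i < p.length + 1, p.getVert i ∈ A := by
    intro i
    induction i with
    | zero => intro _; simpa using huA
    | succ i ih => exact fun hi => hcl _ (ih (by omega)) _ (hsucc i (by omega))
  have hsupp : ∀ x, x ∈ p.support → ∃ j < p.length + 1, x = p.getVert j := by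
    intro x hx
    obtain ⟨j, hj, hjl⟩ := SimpleGraph.Walk.mem_support_iff_exists_getVert.1 hx
    exact ⟨j, by omega, hj.symm⟩
  have hone : ∀ i j, i < j → j < p.length + 1 → H.Adj (p.getVert i) (p.getVert j) →
      i + 1 = j := by
    intro i j hij hj ha
    -- The stretch of `p` from `i` to `j` and the single edge are two paths with the same ends.
    let q : H.Walk (p.getVert i) (p.getVert j) :=
      ((p.drop i).take (j - i)).copy rfl (by
        rw [SimpleGraph.Walk.drop_getVert]; congr 1; omega)
    have hq : q.IsPath := by
      simp only [q, SimpleGraph.Walk.isPath_copy]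
      exact (hp.drop i).take _
    have hql : q.length = j - i := by
      simp [q, SimpleGraph.Walk.take_length, SimpleGraph.Walk.drop_length]; omega
    have := (hac.subsingleton_path _ _).elim ⟨q, hq⟩ (SimpleGraph.Path.singleton ha)
    have h2 := congrArg (fun z : H.Path _ _ => z.1.length) this
    simp [SimpleGraph.Path.singleton, hql] at h2
    omega
  refine ⟨p.length + 1, p.getVert, by omega, hmemA, hinj, ?_, ?_⟩
  · intro i hi j hj
    constructor
    · intro ha
      rcases lt_trichotomy i j with h | h | h
      · exact Or.inl (hone i j h hj ha)
      · subst h; exact absurd ha (H.loopless.irrefl _)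
      · exact Or.inr (hone j i h hi ha.symm)
    · rintro (rfl | rfl)
      · exact hsucc i (by omega)
      · exact (hsucc j (by omega)).symm
  · intro i hi x hx
    by_contra hcon
    push Not at hcon
    have hxs : x ∉ p.support := fun h => by
      obtain ⟨j, hj, rfl⟩ := hsupp x h
      exact hcon j hj rfl
    rcases Nat.eq_zero_or_pos i with h0 | h0
    · subst h0
      rw [SimpleGraph.Walk.getVert_zero] at hx
      have := hmax (p.length + 1) ⟨x, hcl _ huA _ hx, w, SimpleGraph.Walk.cons hx.symm p,
        hp.cons hxs, by simp⟩
      omega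
    · by_cases hl : i = p.length
      · subst hl
        rw [SimpleGraph.Walk.getVert_length] at hx
        have := hmax (p.length + 1) ⟨u, huA, x, p.concat hx, hp.concat hxs hx, by simp⟩
        omega
      · have h1 := hsucc i (by omega)
        have h2 := hsucc (i - 1) (by omega)
        rw [Nat.sub_add_cancel h0] at h2
        refine hdeg _ _ _ _ ?_ ?_ ?_ h1 h2.symm hx
        · intro h; have := hinj _ (by omega) _ (by omega) h; omega
        · exact fun h => hcon _ (by omega) h.symm
        · exact fun h => hcon _ (by omega) h.symm

/-- Clearing a disjoint union `A` of path components of `G - X`, one at a time. The lower bound `e`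
on the shields is `r + 1` on inner vertices of paths and at least `1` on end vertices. -/
lemma win_linear_forest [Fintype V] (G : SimpleGraph V) (X : Finset V) (r : ℕ) (hr : 1 ≤ r)
    (hacyclic : (G.induce {v : V | v ∉ X}).IsAcyclic)
    (hmaxdeg : ∀ v a b c : {v : V | v ∉ X}, a ≠ b → a ≠ c → b ≠ c →
        (G.induce {v : V | v ∉ X}).Adj v a → (G.induce {v : V | v ∉ X}).Adj v b →
        ¬ (G.induce {v : V | v ∉ X}).Adj v c)
    (hcomp : ∀ v : {v : V | v ∉ X},
        2 * r - 1 ≤ ((G.induce {v : V | v ∉ X}).connectedComponentMk v).supp.ncard)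
    (e : V → ℕ) (he1 : ∀ v a, v ∉ X → a ∉ X → G.Adj v a → 1 ≤ e v)
    (he2 : ∀ v a b, v ∉ X → a ∉ X → b ∉ X → a ≠ b → G.Adj v a → G.Adj v b → r + 1 ≤ e v) :
    ∀ (n : ℕ) (st : State V), st.A.card ≤ n → (∀ v ∈ st.A, v ∉ X) →
      (∀ v ∈ st.A, ∀ a, a ∉ X → G.Adj v a → a ∈ st.A) → (∀ v ∈ st.A, st.T v = r) →
      (∀ v ∈ st.A, e v ≤ st.S v) → Win G st := by
  intro n
  induction n with
  | zero =>
    intro st hc _ _ _ _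
    exact Win.done st (Finset.card_eq_zero.1 (by omega))
  | succ n ih =>
    intro st hc hX hcl hT hS
    rcases st.A.eq_empty_or_nonempty with h0 | ⟨a₀, ha₀⟩
    · exact Win.done st h0
    obtain ⟨m, f, hm, hfA, hinj, hadj, hclosed⟩ := exists_path_component
      (G.induce {v : V | v ∉ X}) hacyclic hmaxdeg {v | (v : V) ∈ st.A}
      ⟨⟨a₀, hX a₀ ha₀⟩, ha₀⟩ (fun a ha b hab => hcl _ ha _ b.2 hab)
    have hadj' : ∀ i < m, ∀ j < m, G.Adj (f i : V) (f j) ↔ (i + 1 = j ∨ j + 1 = i) := hadj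
    have hmr : 2 * r - 1 ≤ m := by
      refine (hcomp (f 0)).trans ?_
      have hsub : ((G.induce {v : V | v ∉ X}).connectedComponentMk (f 0)).supp ⊆
          ((Finset.range m).image f : Set {v : V | v ∉ X}) := by
        intro x hx
        rw [SimpleGraph.ConnectedComponent.mem_supp_iff, SimpleGraph.ConnectedComponent.eq] at hx
        obtain ⟨q⟩ := hx.symm
        have key : ∀ (a b : {v : V | v ∉ X}) (_ : (G.induce {v : V | v ∉ X}).Walk a b),
            (∃ j < m, a = f j) → ∃ j < m, b = f j := by
          intro a b q
          induction q with
          | nil => exact id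
          | cons h _ ih =>
            rintro ⟨j, hj, rfl⟩
            exact ih (hclosed j hj _ h)
        obtain ⟨j, hj, rfl⟩ := key _ _ q ⟨0, hm, rfl⟩
        simp only [Finset.coe_image, Finset.coe_range]
        exact ⟨j, hj, rfl⟩
      calc _ ≤ ((Finset.range m).image f : Set {v : V | v ∉ X}).ncard :=
            Set.ncard_le_ncard hsub (Finset.finite_toSet _)
        _ = ((Finset.range m).image f).card := Set.ncard_coe_finset _
        _ ≤ m := by simpa using Finset.card_image_le (s := Finset.range m) (f := f)
    let g : ℕ → V := fun i => (f i : V)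
    have hg : ∀ i < m, g i ∈ st.A := hfA
    have hgX : ∀ i, g i ∉ X := fun i => (f i).2
    set P := (Finset.range m).image g with hP
    have hPsub : P ⊆ st.A := by
      intro x hx
      obtain ⟨i, hi, rfl⟩ := Finset.mem_image.1 hx
      exact hg i (Finset.mem_range.1 hi)
    have hgP : ∀ i < m, g i ∈ P := fun i hi =>
      Finset.mem_image_of_mem g (Finset.mem_range.2 hi)
    have hPcl : ∀ i < m, ∀ a, a ∉ X → G.Adj (g i) a → a ∈ P := by
      intro i hi a ha h
      obtain ⟨j, hj, hja⟩ := hclosed i hi ⟨a, ha⟩ h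
      have : a = g j := congrArg Subtype.val hja
      rw [this]; exact hgP j hj
    let st₁ : State ℕ := ⟨Finset.range m,
      fun n => if m = 1 then 0 else if n = 0 ∨ n + 1 = m then 1 else r + 1, fun _ => r⟩
    have hwin₁ : Win ray st₁ := win_path r m hr hmr st₁ rfl (fun _ _ => rfl) (fun _ _ => rfl)
    have hmem₁ : ∀ i, i ∈ st₁.A → i < m := fun i hi => Finset.mem_range.1 hi
    refine hwin₁.simulate g (st.A \ P) st ?_ ?_ ?_ ?_ ?_ ?_ ?_ ?_
    · intro i hi j hj h
      exact hinj i (hmem₁ i hi) j (hmem₁ j hj) (Subtype.ext h)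
    · intro i hi j hj
      exact (hadj' i (hmem₁ i hi) j (hmem₁ j hj)).symm
    · exact (Finset.union_sdiff_of_subset hPsub).symm
    · intro i hi h
      exact (Finset.mem_sdiff.1 h).2 (hgP i (hmem₁ i hi))
    · intro i hi b hb h
      rw [Finset.mem_sdiff] at hb
      exact hb.2 (hPcl i (hmem₁ i hi) b (hX b hb.1) h)
    · intro i hi
      have him := hmem₁ i hi
      refine le_trans ?_ (hS _ (hg i him))
      simp only [st₁]
      split_ifs with h1 h2
      · exact Nat.zero_le _
      · rcases h2 with h2 | h2
        · exact he1 _ (g (i + 1)) (hgX i) (hgX _)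
            ((hadj' i him (i + 1) (by omega)).2 (Or.inl rfl))
        · exact he1 _ (g (i - 1)) (hgX i) (hgX _)
            ((hadj' i him (i - 1) (by omega)).2 (by omega))
      · refine he2 _ (g (i + 1)) (g (i - 1)) (hgX i) (hgX _) (hgX _) ?_
          ((hadj' i him (i + 1) (by omega)).2 (Or.inl rfl))
          ((hadj' i him (i - 1) (by omega)).2 (by omega))
        intro h
        have := hinj (i + 1) (by omega) (i - 1) (by omega) (Subtype.ext h)
        omega
    · intro i hi
      exact (hT _ (hg i (hmem₁ i hi))).symm
    · intro st' hA' hS' hT'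
      have hsub : ∀ v ∈ st'.A, v ∈ st.A ∧ v ∉ P := fun v hv => by
        rw [hA'] at hv; exact Finset.mem_sdiff.1 hv
      refine ih st' ?_ (fun v hv => hX v (hsub v hv).1) ?_ ?_ ?_
      · have h1 := Finset.card_sdiff_add_card_eq_card hPsub
        have h2 : 0 < P.card := Finset.card_pos.2 ⟨_, hgP 0 hm⟩
        rw [hA']; omega
      · intro v hv a ha h
        have hv' := hsub v hv
        rw [hA', Finset.mem_sdiff]
        refine ⟨hcl v hv'.1 a ha h, fun haP => hv'.2 ?_⟩
        obtain ⟨i, hi, rfl⟩ := Finset.mem_image.1 haP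
        exact hPcl i (Finset.mem_range.1 hi) v (hX v hv'.1) h.symm
      · intro v hv
        rw [hT' v (hA' ▸ hv)]; exact hT v (hsub v hv).1
      · intro v hv
        rw [hS' v (hA' ▸ hv)]; exact hS v (hsub v hv).1

/-- Suppose `G` is a graph and `X` is an independent set of vertices of `G`
containing every vertex of degree at least `3` (having three distinct neighbors), such that
`G − X` is a linear forest (acyclic with maximum degree at most `2`, i.e. a disjoint union of
paths, possibly empty) and the order of each component of `G − X` is at least `2r−1` for some
`r ∈ ℕ` (so `r ≥ 1`).  Then `G` is `ST⁽⁴⁾`-`(r+1, r)`-degenerate; consequently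
`ST⁽⁴⁾*(G) ≤ 2 + 1/r`. -/
theorem st4Deg_of_independent_linear_forest {V : Type} [Fintype V] (G : SimpleGraph V)
    (X : Finset V) (r : ℕ) (hr : 1 ≤ r)
    (hXindep : ∀ x ∈ X, ∀ y ∈ X, ¬ G.Adj x y)
    (hXdeg : ∀ v : V, (∃ a b c : V, a ≠ b ∧ a ≠ c ∧ b ≠ c ∧
        G.Adj v a ∧ G.Adj v b ∧ G.Adj v c) → v ∈ X)
    (hacyclic : (G.induce {v : V | v ∉ X}).IsAcyclic)
    (hmaxdeg : ∀ v a b c : {v : V | v ∉ X}, a ≠ b → a ≠ c → b ≠ c →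
        (G.induce {v : V | v ∉ X}).Adj v a → (G.induce {v : V | v ∉ X}).Adj v b →
        ¬ (G.induce {v : V | v ∉ X}).Adj v c)
    (hcomp : ∀ v : {v : V | v ∉ X},
        2 * r - 1 ≤ ((G.induce {v : V | v ∉ X}).connectedComponentMk v).supp.ncard) :
    ST4Deg G (fun _ => r + 1) (fun _ => r) ∧ ST4Star G ≤ 2 + 1 / (r : ℝ) := by
  have hmain : ST4Deg G (fun _ => r + 1) (fun _ => r) := by
    -- The number of neighbours in `X`; it is `0` on inner vertices of paths and `≤ 1` on ends.
    let d : V → ℕ := fun v => (X.filter (G.Adj v)).card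
    have hd0 : ∀ v a b, v ∉ X → a ∉ X → b ∉ X → a ≠ b → G.Adj v a → G.Adj v b → d v = 0 := by
      intro v a b hv ha hb hab h1 h2
      by_contra hne
      obtain ⟨c, hc⟩ := Finset.card_pos.1 (Nat.pos_of_ne_zero hne)
      rw [Finset.mem_filter] at hc
      exact hv (hXdeg v ⟨a, b, c, hab, fun h => ha (h ▸ hc.1), fun h => hb (h ▸ hc.1),
        h1, h2, hc.2⟩)
    have hd1 : ∀ v a, v ∉ X → a ∉ X → G.Adj v a → d v ≤ 1 := by
      intro v a hv ha h1
      by_contra hne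
      obtain ⟨b, hb, c, hc, hbc⟩ := Finset.one_lt_card.1 (not_le.1 hne)
      rw [Finset.mem_filter] at hb hc
      exact hv (hXdeg v ⟨a, b, c, fun h => ha (h ▸ hb.1), fun h => ha (h ▸ hc.1), hbc,
        h1, hb.2, hc.2⟩)
    have hd2 : ∀ v, v ∉ X → d v ≤ 2 := by
      intro v hv
      by_contra hne
      obtain ⟨a, b, c, ha, hb, hc, hab, hac, hbc⟩ := Finset.two_lt_card_iff.1 (not_le.1 hne)
      rw [Finset.mem_filter] at ha hb hc
      exact hv (hXdeg v ⟨a, b, c, hab, hac, hbc, ha.2, hb.2, hc.2⟩)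
    have hle : ∀ v, v ∉ X → r * d v ≤ r + 1 := by
      intro v hv
      by_cases h : ∃ a, a ∉ X ∧ G.Adj v a
      · obtain ⟨a, ha, h⟩ := h
        calc r * d v ≤ r * 1 := Nat.mul_le_mul_left r (hd1 v a hv ha h)
          _ ≤ r + 1 := by omega
      · -- An isolated vertex of `G - X` is a component of order `1`, so `r = 1`.
        have hr1 : 2 * r - 1 ≤ 1 := by
          refine (hcomp ⟨v, hv⟩).trans ?_
          rw [← Set.ncard_singleton (⟨v, hv⟩ : {v : V | v ∉ X})]
          refine Set.ncard_le_ncard ?_ (Set.finite_singleton _)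
          intro x hx
          rw [SimpleGraph.ConnectedComponent.mem_supp_iff,
            SimpleGraph.ConnectedComponent.eq] at hx
          obtain ⟨q⟩ := hx.symm
          cases q with
          | nil => rfl
          | @cons _ y _ h' _ => exact absurd ⟨y.1, y.2, h'⟩ h
        have := hd2 v hv
        obtain rfl : r = 1 := by omega
        omega
    refine (win_delete_indep (Finset.univ \ X) r hr (fun v => r + 1 - r * d v) X
      ⟨Finset.univ, fun _ => r + 1, fun _ => r⟩ ?_ Finset.disjoint_sdiff hXindep
      (fun _ _ => rfl) ?_ ?_).st4DegOn
    · simp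
    · intro v hv
      have := hle v (Finset.mem_sdiff.1 hv).2
      change r + 1 - r * d v + r * d v ≤ r + 1
      omega
    · intro st' hA' hT' hS'
      refine win_linear_forest G X r hr hacyclic hmaxdeg hcomp (fun v => r + 1 - r * d v) ?_ ?_
        _ st' le_rfl ?_ ?_ (fun v hv => hT' v (hA' ▸ hv)) (fun v hv => hS' v (hA' ▸ hv))
      · intro v a hv ha h
        have h1 := Nat.mul_le_mul_left r (hd1 v a hv ha h)
        change 1 ≤ r + 1 - r * d v
        omega
      · intro v a b hv ha hb hab h1 h2
        simp [hd0 v a b hv ha hb hab h1 h2]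
      · intro v hv
        rw [hA'] at hv
        exact (Finset.mem_sdiff.1 hv).2
      · intro v _ a ha _
        rw [hA']
        simp [ha]
  refine ⟨hmain, ?_⟩
  have hr0 : (0 : ℝ) < r := by exact_mod_cast hr
  refine csInf_le ⟨0, ?_⟩ ⟨r + 1, r, hr, hmain, ?_⟩
  · rintro x ⟨s, t, _, _, rfl⟩
    positivity
  · push_cast
    field_simp
    ring

end StrictDeg
end
end
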